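/- Let R : Fin 5 → EuclideanSpace ℝ (Fin 4) be the vertices of a regular 4-dimensional simplex (all pairwise distances equal and positive). There exists ε > 0 such that for every V : Fin 5 → EuclideanSpace ℝ (Fin 4) with ‖V i − R i‖ < ε for all i, the family V is affinely independent and the simplex conv(range V) has a vertex V i whose solid angle is at most the solid angle of conv(range R) at R 0. -/

import Mathlib

/-!
The solid angle of a simplex at a vertex is proportional to the Gaussian mass of the cone spanned
there (`hausdorff_cone`), because the rotation-invariant finite measure on the sphere is unique up
to a factor. Two facts about these masses are combined.

*The angle sum.* Let `h 0, …, h 4` be the gradients of the barycentric coordinates, so that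
`∑ h i = 0`. A suitable integer-valued function of the signs of `⟪h i, y⟫` is odd under `y ↦ -y`
almost everywhere; integrating it expresses the sum of the five vertex angles through the dihedral
angles `arccos c i j` (`sum_vcone`, `sum_vcone_arccos`). Rescale the simplex so that its squared
edge lengths are `1 + p j k` with `∑ p j k = 0`, and put `s = max |p j k|`. As `arccos` is strictly
concave near `1/4` and the first-order term is controlled by `∑ h i = 0` (`sum_arccos_le`), the
angle sum exceeds the regular value by at most `O(s²)`, and it is smaller by at least a multiple
of `s²` when all row sums `P i = ∑ j, p i j` are `O(s²)` (`Cfg.sum_vcone_le`).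

*The individual angles.* In edge coordinates the mass of the `i`-th cone is
`|det| * ∫ exp (-(Gram form))` over the positive orthant, with the same determinant for every vertex
(`Cfg.gauss_vcone`). Expanding to first order (`orth_expansion`, `Cfg.pert_sum`) gives
`|det| * (I₀ - m * P i + O(s²))` with constants `I₀` and `m > 0`.

Now let `P i` be the largest row sum (`exists_vcone_le`). If `P i ≥ K₁ s²` for a large constant `K₁`,
the angle at `i` lies so far below the average that it beats the possible `O(s²)` excess of the sum.
Otherwise every row sum is `O(s²)`, as they add up to `0`, so the sum of the five angles is at most
five times the regular angle, and some vertex angle is at most the regular one.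
-/

open MeasureTheory
open scoped ENNReal

/-- The solid angle of a set `P ⊆ ℝ⁴` at a point `v`: the 3-dimensional Hausdorff measure
of the set of unit directions `u` such that `v + t • u ∈ P` for some `t > 0`. -/
noncomputable def solidAngle4 (P : Set (EuclideanSpace ℝ (Fin 4)))
    (v : EuclideanSpace ℝ (Fin 4)) : ℝ≥0∞ :=
  μH[3] {u : EuclideanSpace ℝ (Fin 4) | ‖u‖ = 1 ∧ ∃ t > (0 : ℝ), v + t • u ∈ P}

section

open Set Metric

open scoped RealInnerProductSpace

/-! ### Finiteness of the area of the sphere -/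

/-- Euclidean four-space. -/
abbrev E4 : Type := EuclideanSpace ℝ (Fin 4)

/-- Radial projection onto the unit sphere of the affine hyperplane `x i = s` of `ℝ⁴`, parametrised
by the three remaining coordinates. -/
noncomputable def faceMap (i : Fin 4) (s : ℝ) (x : Fin 3 → ℝ) : E4 :=
  (‖(WithLp.toLp 2 (i.insertNth s x : Fin 4 → ℝ) : E4)‖)⁻¹ • (WithLp.toLp 2 (i.insertNth s x : Fin 4 → ℝ) : E4)

lemma contDiff_faceMap (i : Fin 4) (s : ℝ) (hs : s ≠ 0) : ContDiff ℝ 1 (faceMap i s) := by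
  have h1 : ContDiff ℝ 1 (fun x : Fin 3 → ℝ => (WithLp.toLp 2 (i.insertNth s x : Fin 4 → ℝ) : E4)) := by
    rw [contDiff_euclidean]
    intro j
    refine Fin.succAboveCases i ?_ (fun k => ?_) j
    · simpa using contDiff_const
    · simpa using contDiff_apply ℝ ℝ k
  have h0 : ∀ x : Fin 3 → ℝ, (WithLp.toLp 2 (i.insertNth s x : Fin 4 → ℝ) : E4) ≠ 0 := by
    intro x h
    have := congrArg (fun y : E4 => y i) h
    simp at this
    exact hs this
  exact ((h1.norm ℝ h0).inv (fun x => by simpa using h0 x)).smul h1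

/-- The sphere is covered by the radial projections of the eight faces of the cube `[-1, 1]⁴`: a unit
vector lies over the face belonging to its largest coordinate. -/
lemma sphere_subset_faces :
    sphere (0 : E4) 1 ⊆ ⋃ i : Fin 4, (faceMap i 1 '' Icc (-1) 1 ∪ faceMap i (-1) '' Icc (-1) 1) := by
  intro u hu
  have hu1 : ‖u‖ = 1 := by simpa using hu
  obtain ⟨i, hi⟩ := Finite.exists_max (fun i => |u i|)
  have hpos : 0 < |u i| := by
    rcases (abs_nonneg (u i)).lt_or_eq with h | h
    · exact h
    · exfalso
      have : u = 0 := by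
        ext j
        have := hi j
        rw [← h] at this
        simpa using this
      rw [this] at hu1
      simp at hu1
  have key : ∀ s : ℝ, u i = s * |u i| → u ∈ faceMap i s '' Icc (-1) 1 := by
    intro s hs
    refine ⟨fun k => u (i.succAbove k) / |u i|, ?_, ?_⟩
    · simp only [mem_Icc, Pi.le_def]
      refine ⟨fun k => ?_, fun k => ?_⟩
      · have := neg_abs_le (u (i.succAbove k))
        have h2 := hi (i.succAbove k)
        rw [le_div_iff₀ hpos]
        simp
        linarith
      · have := le_abs_self (u (i.succAbove k))
        have h2 := hi (i.succAbove k)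
        rw [div_le_iff₀ hpos]
        simp
        linarith
    · have e : (WithLp.toLp 2 (i.insertNth s (fun k => u (i.succAbove k) / |u i|) : Fin 4 → ℝ) : E4)
          = |u i|⁻¹ • u := by
        ext j
        refine Fin.succAboveCases i ?_ (fun k => ?_) j
        · simp
          rw [eq_comm, inv_mul_eq_iff_eq_mul₀ hpos.ne']
          linarith
        · simp [div_eq_inv_mul]
      rw [faceMap, e, norm_smul, hu1]
      simp only [norm_inv, Real.norm_eq_abs, abs_abs, mul_one, inv_inv]
      rw [smul_smul, mul_inv_cancel₀ hpos.ne', one_smul]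
  rw [mem_iUnion]
  refine ⟨i, ?_⟩
  rcases abs_cases (u i) with ⟨h, -⟩ | ⟨h, -⟩
  · left; apply key; rw [h]; ring
  · right; apply key; rw [h]; ring

/-- The unit sphere has finite area, since each projected cube face is a Lipschitz image of a
compact cube in `ℝ³`. -/
lemma hausdorff_sphere_lt_top : μH[3] (sphere (0 : E4) 1) < ∞ := by
  have hface : ∀ (i : Fin 4) (s : ℝ), s ≠ 0 → μH[3] (faceMap i s '' Icc (-1) 1) < ∞ := by
    intro i s hs
    obtain ⟨K, hK⟩ := (contDiff_faceMap i s hs).contDiffOn.exists_lipschitzOnWith one_ne_zero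
      (convex_Icc (-1 : Fin 3 → ℝ) 1) isCompact_Icc
    refine (hK.hausdorffMeasure_image_le (d := 3) (by norm_num)).trans_lt ?_
    have h3 : (μH[3] : Measure (Fin 3 → ℝ)) = volume := by
      rw [← hausdorffMeasure_pi_real]; simp
    rw [h3]
    refine ENNReal.mul_lt_top (by simp) isCompact_Icc.measure_lt_top
  refine (measure_mono sphere_subset_faces).trans_lt ?_
  refine (measure_iUnion_le _).trans_lt ?_
  rw [tsum_fintype]
  refine ENNReal.sum_lt_top.2 fun i _ => (measure_union_le _ _).trans_lt ?_
  exact ENNReal.add_lt_top.2 ⟨hface i 1 (by norm_num), hface i (-1) (by norm_num)⟩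

/-! ### Rotation-invariant measures and solid angles -/

/-- Invariance of a measure on `ℝ⁴` under all linear isometries. -/
def IsoInv (μ : Measure E4) : Prop := ∀ L : E4 ≃ₗᵢ[ℝ] E4, ∀ A, MeasurableSet A → μ (L ⁻¹' A) = μ A

/-- Reflection in the bisector of two points of the sphere exchanges the balls around them. -/
lemma IsoInv.ball_eq {μ : Measure E4} (h : IsoInv μ) {x y : E4} (hx : x ∈ sphere (0 : E4) 1)
    (hy : y ∈ sphere (0 : E4) 1) (r : ℝ) : μ (ball x r) = μ (ball y r) := by
  have hxy : ‖x‖ = ‖y‖ := by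
    rw [mem_sphere_zero_iff_norm] at hx hy; rw [hx, hy]
  rw [← h (Submodule.reflection (ℝ ∙ (x - y))ᗮ) (ball y r) measurableSet_ball,
    LinearIsometryEquiv.preimage_ball]
  congr 2
  rw [LinearIsometryEquiv.eq_symm_apply]
  exact Submodule.reflection_sub hxy

/-- Fubini for the set of pairs `(x, y)` with `dist x y < r` and `y ∈ A`: by invariance every ball of
radius `r` centred on the sphere has the same `μ`-measure. -/
lemma fubini_ball (μ ν : Measure E4) [IsFiniteMeasure μ] [IsFiniteMeasure ν] (hμ : IsoInv μ)
    (hνS : ν (sphere (0 : E4) 1)ᶜ = 0) {x₀ : E4} (hx₀ : x₀ ∈ sphere (0 : E4) 1)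
    {A : Set E4} (hA : IsOpen A) (r : ℝ) :
    ∫⁻ x, ν (ball x r ∩ A) ∂μ = μ (ball x₀ r) * ν A := by
  have hT : MeasurableSet {p : E4 × E4 | dist p.1 p.2 < r ∧ p.2 ∈ A} :=
    ((isOpen_lt (continuous_fst.dist continuous_snd) continuous_const).inter
      (hA.preimage continuous_snd)).measurableSet
  have h1 := Measure.prod_apply (μ := μ) (ν := ν) hT
  rw [Measure.prod_apply_symm (μ := μ) (ν := ν) hT] at h1
  have e1 : ∀ x : E4, (Prod.mk x ⁻¹' {p : E4 × E4 | dist p.1 p.2 < r ∧ p.2 ∈ A}) = ball x r ∩ A := by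
    intro x; ext y; simp [dist_comm]
  simp only [e1] at h1
  rw [← h1]
  have e2 : ∀ᵐ y ∂ν, μ ((fun x => (x, y)) ⁻¹' {p : E4 × E4 | dist p.1 p.2 < r ∧ p.2 ∈ A})
      = A.indicator (fun _ => μ (ball x₀ r)) y := by
    have : ∀ᵐ y ∂ν, y ∈ sphere (0 : E4) 1 := hνS
    filter_upwards [this] with y hy
    by_cases hyA : y ∈ A
    · rw [indicator_of_mem hyA, hμ.ball_eq hx₀ hy]
      congr 1
      ext x; simp [hyA]
    · rw [indicator_of_notMem hyA]
      convert measure_empty (μ := μ)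
      ext x; simp [hyA]
  rw [lintegral_congr_ae e2, lintegral_indicator hA.measurableSet, setLIntegral_const]

lemma ball_pos_of_isoInv (ν : Measure E4) [IsFiniteMeasure ν] (hν : IsoInv ν)
    (hνS : ν (sphere (0 : E4) 1)ᶜ = 0) {x₀ : E4} (hx₀ : x₀ ∈ sphere (0 : E4) 1)
    (hne : ν univ ≠ 0) {r : ℝ} (hr : 0 < r) : ν (ball x₀ r) ≠ 0 := by
  intro h0
  apply hne
  have hS : ν (sphere (0 : E4) 1) = 0 := by
    refine (isCompact_sphere (0 : E4) 1).measure_zero_of_nhdsWithin fun x hx => ?_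
    exact ⟨ball x r, mem_nhdsWithin_of_mem_nhds (ball_mem_nhds x hr), by rw [hν.ball_eq hx hx₀, h0]⟩
  rw [← union_compl_self (sphere (0 : E4) 1)]
  exact measure_union_null hS hνS

/-- For `r > 0`, the points `x` whose `r`-ball lies in `A` contribute the full measure `ν (ball x₀ r)`
to the integral in `fubini_ball`; comparing with the same identity for `A = univ` bounds their
`μ`-measure, and as `r → 0` they exhaust the open set `A`. -/
lemma isoInv_le (μ ν : Measure E4) [IsFiniteMeasure μ] [IsFiniteMeasure ν] (hμ : IsoInv μ)
    (hν : IsoInv ν) (hμS : μ (sphere (0 : E4) 1)ᶜ = 0) (hνS : ν (sphere (0 : E4) 1)ᶜ = 0)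
    {A : Set E4} (hA : IsOpen A) : μ A * ν univ ≤ μ univ * ν A := by
  by_cases hne : ν univ = 0
  · simp [hne]
  obtain ⟨x₀, hx₀⟩ : (sphere (0 : E4) 1).Nonempty := NormedSpace.sphere_nonempty.2 zero_le_one
  have step : ∀ r : ℝ, 0 < r → μ {x | ball x r ⊆ A} * ν univ ≤ μ univ * ν A := by
    intro r hr
    have hb := ball_pos_of_isoInv ν hν hνS hx₀ hne hr
    have h1 := fubini_ball μ ν hμ hνS hx₀ hA r
    have h2 := fubini_ball μ ν hμ hνS hx₀ isOpen_univ r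
    have h3 : ∫⁻ x, ν (ball x r ∩ univ) ∂μ = ν (ball x₀ r) * μ univ := by
      rw [← lintegral_const]
      refine lintegral_congr_ae ?_
      have : ∀ᵐ y ∂μ, y ∈ sphere (0 : E4) 1 := hμS
      filter_upwards [this] with y hy
      rw [inter_univ, hν.ball_eq hy hx₀]
    have hmeas : Measurable fun x => ν (ball x r ∩ A) := by
      have hT : MeasurableSet {p : E4 × E4 | dist p.1 p.2 < r ∧ p.2 ∈ A} :=
        ((isOpen_lt (continuous_fst.dist continuous_snd) continuous_const).inter
          (hA.preimage continuous_snd)).measurableSet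
      convert measurable_measure_prodMk_left (ν := ν) hT using 3 with x
      ext y; simp [dist_comm]
    have h4 : ν (ball x₀ r) * μ {x | ball x r ⊆ A} ≤ μ (ball x₀ r) * ν A := by
      rw [← h1]
      refine le_trans ?_ (mul_meas_ge_le_lintegral hmeas (ν (ball x₀ r)))
      gcongr 1
      refine measure_mono_ae ?_
      have : ∀ᵐ y ∂μ, y ∈ sphere (0 : E4) 1 := hμS
      filter_upwards [this] with y hy hyA
      have hyA' : ball y r ⊆ A := hyA
      change ν (ball x₀ r) ≤ ν (ball y r ∩ A)
      rw [inter_eq_left.2 hyA', hν.ball_eq hy hx₀]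
    rw [h3] at h2
    have h5 : ν (ball x₀ r) * (μ {x | ball x r ⊆ A} * ν univ) ≤ ν (ball x₀ r) * (μ univ * ν A) := by
      calc ν (ball x₀ r) * (μ {x | ball x r ⊆ A} * ν univ)
          = (ν (ball x₀ r) * μ {x | ball x r ⊆ A}) * ν univ := by ring
        _ ≤ (μ (ball x₀ r) * ν A) * ν univ := by gcongr
        _ = (μ (ball x₀ r) * ν univ) * ν A := by ring
        _ = _ := by rw [← h2]; ring
    exact (ENNReal.mul_le_mul_iff_right hb (measure_ne_top _ _)).1 h5
  have hU : A = ⋃ n : ℕ, {x | ball x (1 / ((n : ℝ) + 1)) ⊆ A} := by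
    ext x
    simp only [mem_iUnion, mem_ofPred_eq]
    constructor
    · intro hx
      obtain ⟨ε, hε, h⟩ := Metric.isOpen_iff.1 hA x hx
      obtain ⟨n, hn⟩ := exists_nat_one_div_lt hε
      exact ⟨n, (ball_subset_ball hn.le).trans h⟩
    · rintro ⟨n, hn⟩
      exact hn (mem_ball_self (by positivity))
  have hmono : Monotone fun n : ℕ => {x : E4 | ball x (1 / ((n : ℝ) + 1)) ⊆ A} := by
    intro m n hmn x hx
    exact (ball_subset_ball (one_div_le_one_div_of_le (by positivity) (by gcongr))).trans hx
  have ht := tendsto_measure_iUnion_atTop (μ := μ) hmono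
  rw [← hU] at ht
  have ht2 := ENNReal.Tendsto.mul_const (b := ν univ) ht (Or.inr (measure_ne_top _ _))
  exact le_of_tendsto' ht2 fun n => step _ (by positivity)

/-- Uniqueness, up to a factor, of the rotation-invariant finite measure on the sphere. -/
lemma isoInv_unique (μ ν : Measure E4) [IsFiniteMeasure μ] [IsFiniteMeasure ν] (hμ : IsoInv μ)
    (hν : IsoInv ν) (hμS : μ (sphere (0 : E4) 1)ᶜ = 0) (hνS : ν (sphere (0 : E4) 1)ᶜ = 0)
    (A : Set E4) : μ A * ν univ = μ univ * ν A := by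
  have heq : ∀ B : Set E4, IsOpen B → μ B * ν univ = μ univ * ν B := by
    intro B hB
    refine le_antisymm (isoInv_le μ ν hμ hν hμS hνS hB) ?_
    have := isoInv_le ν μ hν hμ hνS hμS hB
    rw [mul_comm, mul_comm (μ B)]; exact this
  have h1 : IsFiniteMeasure ((ν univ) • μ) := Measure.smul_finite μ (measure_ne_top _ _)
  have : (ν univ) • μ = (μ univ) • ν := by
    refine ext_of_generate_finite {s : Set E4 | IsOpen s} (BorelSpace.measurable_eq (α := E4)) ?_ ?_ ?_
    · exact isPiSystem_isOpen
    · intro s hs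
      simp only [Measure.smul_apply, smul_eq_mul]
      rw [mul_comm, heq s hs]
    · simp only [Measure.smul_apply, smul_eq_mul]
      rw [mul_comm]
  have h2 := congrArg (fun m : Measure E4 => m A) this
  simp only [Measure.smul_apply, smul_eq_mul] at h2
  rw [mul_comm, h2]

/-- The Gaussian measure on `ℝ⁴` with density `exp (-‖y‖ ^ 2)`; it is not normalised. -/
noncomputable def gaussE : Measure E4 :=
  volume.withDensity fun y => ENNReal.ofReal (Real.exp (-‖y‖ ^ 2))

lemma integrable_gauss : Integrable (fun y : E4 => Real.exp (-‖y‖ ^ 2)) := by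
  have := (GaussianFourier.integrable_cexp_neg_mul_sq_norm_add (V := E4) (b := 1) (by simp) 0 0).norm
  refine this.congr (Filter.Eventually.of_forall fun y => ?_)
  simp only [Complex.norm_exp]
  congr 1
  simp [← Complex.ofReal_pow]

instance : IsFiniteMeasure gaussE :=
  isFiniteMeasure_withDensity_ofReal integrable_gauss.2

lemma isoInv_gauss : IsoInv gaussE := by
  intro L A hA
  have hm : MeasurePreserving L volume volume := L.measurePreserving
  rw [gaussE, withDensity_apply _ hA, withDensity_apply _ (hm.measurable hA),
    ← hm.setLIntegral_comp_preimage hA (by fun_prop)]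
  simp

lemma gauss_ac : gaussE ≪ volume := withDensity_absolutelyContinuous _ _

lemma gauss_univ_ne_zero : gaussE univ ≠ 0 := by
  have h : (0 : ℝ) < ∫ y : E4, Real.exp (-‖y‖ ^ 2) := integral_exp_pos integrable_gauss
  rw [gaussE, withDensity_apply _ MeasurableSet.univ, Measure.restrict_univ,
    ← ofReal_integral_eq_lintegral_ofReal integrable_gauss
      (Filter.Eventually.of_forall fun y => (Real.exp_pos _).le)]
  simpa using h

/-- The solid angle of a cone is proportional to its Gaussian mass: both the area on the sphere and
the radial push-forward of `gaussE` are rotation-invariant. -/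
lemma hausdorff_cone {C : Set E4} (hC : MeasurableSet C)
    (hcone : ∀ y : E4, y ≠ 0 → (‖y‖⁻¹ • y ∈ C ↔ y ∈ C)) :
    μH[3] (C ∩ sphere (0 : E4) 1) * gaussE univ = μH[3] (sphere (0 : E4) 1) * gaussE C := by
  set μ : Measure E4 := (μH[3] : Measure E4).restrict (sphere (0 : E4) 1) with hμ
  set N : E4 → E4 := fun y => ‖y‖⁻¹ • y with hN
  have hNm : Measurable N := by fun_prop
  set ν : Measure E4 := gaussE.map N with hν
  have : IsFiniteMeasure μ := ⟨by rw [hμ, Measure.restrict_apply_univ]; exact hausdorff_sphere_lt_top⟩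
  have hSm : MeasurableSet (sphere (0 : E4) 1) := isClosed_sphere.measurableSet
  have h0 : gaussE {0} = 0 := gauss_ac (by simp)
  have hμI : IsoInv μ := by
    intro L A hA
    rw [hμ, Measure.restrict_apply (L.continuous.measurable hA), Measure.restrict_apply hA]
    have : (L ⁻¹' A ∩ sphere (0 : E4) 1) = L ⁻¹' (A ∩ sphere (0 : E4) 1) := by
      ext x; simp
    rw [this]
    exact L.toIsometryEquiv.hausdorffMeasure_preimage 3 _
  have hνI : IsoInv ν := by
    intro L A hA
    rw [hν, Measure.map_apply hNm hA, Measure.map_apply hNm (L.continuous.measurable hA),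
      ← isoInv_gauss L _ (hNm hA)]
    congr 1
    ext x; simp [hN]
  have hμS : μ (sphere (0 : E4) 1)ᶜ = 0 := by
    rw [hμ, Measure.restrict_apply hSm.compl]; simp
  have hνS : ν (sphere (0 : E4) 1)ᶜ = 0 := by
    rw [hν, Measure.map_apply hNm hSm.compl]
    refine measure_mono_null ?_ h0
    intro x hx
    by_contra hne
    apply hx
    simp only [mem_singleton_iff] at hne
    simp [hN, norm_smul, hne]
  have := isoInv_unique μ ν hμI hνI hμS hνS C
  rw [hμ, Measure.restrict_apply hC, Measure.restrict_apply_univ, hν, Measure.map_apply hNm hC,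
    Measure.map_apply hNm MeasurableSet.univ, preimage_univ] at this
  rw [this]
  congr 1
  refine measure_congr ?_
  have hae : ∀ᵐ y ∂gaussE, y ≠ 0 := by
    rw [ae_iff]; simpa using h0
  filter_upwards [hae] with y hy
  exact propext (hcone y hy)

/-! ### Gaussian mass of a wedge -/

/-- Cauchy's functional equation on `(0, A]` for a nonnegative function. -/
lemma linear_of_additive {f : ℝ → ℝ} {A : ℝ} (hA : 0 < A)
    (hf : ∀ x, 0 < x → x ≤ A → 0 ≤ f x)
    (hadd : ∀ x y, 0 < x → 0 < y → x + y ≤ A → f (x + y) = f x + f y)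
    {x : ℝ} (hx : 0 < x) (hxA : x ≤ A) : f x = x / A * f A := by
  have hmono : ∀ a b, 0 < a → a ≤ b → b ≤ A → f a ≤ f b := by
    intro a b ha hab hb
    rcases hab.eq_or_lt with rfl | h
    · exact le_rfl
    · have := hadd a (b - a) ha (by linarith) (by linarith)
      rw [add_sub_cancel] at this
      have := hf (b - a) (by linarith) (by linarith)
      linarith
  have hmul : ∀ (b : ℝ) (k : ℕ), 0 < b → (k + 1) * b ≤ A → f ((k + 1) * b) = (k + 1) * f b := by
    intro b k hb
    induction k with
    | zero => intro _; simp
    | succ k ih =>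
      intro h
      push_cast at h ⊢
      have h1 : ((k : ℝ) + 1 + 1) * b = (k + 1) * b + b := by ring
      rw [h1] at h ⊢
      rw [hadd _ _ (by positivity) hb h, ih (by linarith)]
      ring
  have hfA : 0 ≤ f A := hf A hA le_rfl
  have hpart : ∀ n : ℕ, (n + 1 : ℝ) * f (A / (n + 1)) = f A := by
    intro n
    have hn : (0 : ℝ) < n + 1 := by positivity
    rw [← hmul _ n (by positivity) (by rw [mul_div_cancel₀ _ hn.ne'])]
    rw [mul_div_cancel₀ _ hn.ne']
  -- sandwich `x` between consecutive multiples of `A / (n + 1)`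
  have hbound : ∀ n : ℕ, |f x - x / A * f A| ≤ f A * (1 / ((n : ℝ) + 1)) := by
    intro n
    have hn : (0 : ℝ) < n + 1 := by positivity
    set b := A / (n + 1) with hb
    have hb0 : 0 < b := by positivity
    have hfb : f b = f A / (n + 1) := by rw [eq_div_iff hn.ne', ← hpart n]; ring
    have hAb : A = (n + 1) * b := by rw [hb, mul_div_cancel₀ _ hn.ne']
    set k := ⌊x / b⌋₊ with hk
    have hk1 : (k : ℝ) ≤ x / b := Nat.floor_le (by positivity)
    have hk2 : x / b < k + 1 := Nat.lt_floor_add_one _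
    rw [le_div_iff₀ hb0] at hk1
    rw [div_lt_iff₀ hb0] at hk2
    have hlow : k * f b ≤ f x := by
      rcases Nat.eq_zero_or_pos k with h | h
      · rw [h]; simpa using hf x hx hxA
      · obtain ⟨j, hj⟩ : ∃ j, k = j + 1 := ⟨k - 1, by omega⟩
        rw [hj] at hk1 ⊢
        push_cast at hk1 ⊢
        rw [← hmul b j hb0 (by linarith)]
        exact hmono _ _ (by positivity) hk1 hxA
    have hup : f x ≤ (k + 1) * f b := by
      by_cases h : ((k : ℝ) + 1) * b ≤ A
      · rw [← hmul b k hb0 h]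
        exact hmono _ _ hx hk2.le h
      · have h1 : (n : ℝ) + 1 < k + 1 := by
          push Not at h
          rw [hAb] at h
          exact lt_of_mul_lt_mul_right h hb0.le
        have h2 : f x ≤ f A := hmono _ _ hx hxA le_rfl
        have h3 : f A = (n + 1) * f b := (hpart n).symm
        have h4 : 0 ≤ f b := by rw [hfb]; positivity
        nlinarith
    have e1 : x / A * f A = x / b * f b := by
      rw [hfb, hb]; field_simp
    have h4 : 0 ≤ f b := by rw [hfb]; positivity
    have e2 : f A * (1 / ((n : ℝ) + 1)) = f b := by rw [hfb]; ring
    have h5 : (k : ℝ) ≤ x / b := by rwa [le_div_iff₀ hb0]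
    have h6 : x / b < k + 1 := by rwa [div_lt_iff₀ hb0]
    rw [e1, e2, abs_le]
    constructor <;> nlinarith
  have ht : Filter.Tendsto (fun n : ℕ => f A * (1 / ((n : ℝ) + 1))) Filter.atTop (nhds 0) := by
    simpa using tendsto_one_div_add_atTop_nhds_zero_nat.const_mul (f A)
  have := ge_of_tendsto' ht hbound
  have h0 := abs_nonneg (f x - x / A * f A)
  have : |f x - x / A * f A| = 0 := le_antisymm this h0
  rw [abs_eq_zero] at this
  linarith

lemma measurableSet_le_and_le {f g h k : E4 → ℝ} (hf : Continuous f) (hg : Continuous g)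
    (hh : Continuous h) (hk : Continuous k) : MeasurableSet {y | f y ≤ g y ∧ h y ≤ k y} :=
  ((isClosed_le hf hg).inter (isClosed_le hh hk)).measurableSet

lemma exists_isometry_pair {e f e' f' : E4} (he : ‖e‖ = 1) (hf : ‖f‖ = 1) (hef : ⟪e, f⟫ = 0)
    (he' : ‖e'‖ = 1) (hf' : ‖f'‖ = 1) (hef' : ⟪e', f'⟫ = 0) :
    ∃ L : E4 ≃ₗᵢ[ℝ] E4, L e = e' ∧ L f = f' := by
  have key : ∀ {e f : E4}, ‖e‖ = 1 → ‖f‖ = 1 → ⟪e, f⟫ = 0 →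
      ∃ b : OrthonormalBasis (Fin 4) ℝ E4, b 0 = e ∧ b 1 = f := by
    intro e f he hf hef
    have hv : Orthonormal ℝ (({0, 1} : Set (Fin 4)).domRestrict (![e, f, 0, 0] : Fin 4 → E4)) := by
      constructor
      · rintro ⟨i, hi⟩
        rcases hi with rfl | hi
        · simpa [domRestrict] using he
        · rw [mem_singleton_iff] at hi; subst hi; simpa [domRestrict] using hf
      · rintro ⟨i, hi⟩ ⟨j, hj⟩ hij
        have hij' : i ≠ j := fun h => hij (Subtype.ext h)
        simp only [mem_insert_iff, mem_singleton_iff] at hi hj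
        rcases hi with rfl | rfl <;> rcases hj with rfl | rfl
        · exact absurd rfl hij'
        · simpa [domRestrict] using hef
        · simpa [domRestrict, real_inner_comm] using hef
        · exact absurd rfl hij'
    obtain ⟨b, hb⟩ := hv.exists_orthonormalBasis_extension_of_card_eq (by simp)
    exact ⟨b, by simpa using hb 0 (by simp), by simpa using hb 1 (by simp)⟩
  obtain ⟨b, hb0, hb1⟩ := key he hf hef
  obtain ⟨b', hb0', hb1'⟩ := key he' hf' hef'
  refine ⟨b.equiv b' (Equiv.refl _), ?_, ?_⟩
  · rw [← hb0, ← hb0']; simp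
  · rw [← hb1, ← hb1']; simp

lemma gauss_real_preimage (L : E4 ≃ₗᵢ[ℝ] E4) {A : Set E4} (hA : MeasurableSet A) :
    gaussE.real (L ⁻¹' A) = gaussE.real A := by
  simp only [Measure.real, isoInv_gauss L A hA]

lemma gauss_hyperplane {n : E4} (hn : n ≠ 0) : gaussE {y | ⟪n, y⟫ = 0} = 0 := by
  apply gauss_ac
  have h := Measure.addHaar_submodule (volume : Measure E4) (ℝ ∙ n)ᗮ (by
    intro h
    have : n ∈ (ℝ ∙ n)ᗮ := by rw [h]; trivial
    rw [Submodule.mem_orthogonal_singleton_iff_inner_right] at this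
    exact hn (inner_self_eq_zero.1 this))
  convert h using 2
  ext y
  simp [Submodule.mem_orthogonal_singleton_iff_inner_right]

/-- Gaussian mass of the dihedral wedge of opening angle `θ`: the points with `⟪e, y⟫ ≥ 0` on the
nonpositive side of `cos θ • e + sin θ • f`. It is used for orthonormal `e`, `f`. -/
noncomputable def luneR (e f : E4) (θ : ℝ) : ℝ :=
  gaussE.real {y | 0 ≤ ⟪e, y⟫ ∧ Real.cos θ * ⟪e, y⟫ + Real.sin θ * ⟪f, y⟫ ≤ 0}

lemma luneR_eq {e f e' f' : E4} (he : ‖e‖ = 1) (hf : ‖f‖ = 1) (hef : ⟪e, f⟫ = 0)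
    (he' : ‖e'‖ = 1) (hf' : ‖f'‖ = 1) (hef' : ⟪e', f'⟫ = 0) (θ : ℝ) :
    luneR e f θ = luneR e' f' θ := by
  obtain ⟨L, hLe, hLf⟩ := exists_isometry_pair he hf hef he' hf' hef'
  have hm : MeasurableSet {y : E4 | 0 ≤ ⟪e', y⟫ ∧ Real.cos θ * ⟪e', y⟫ + Real.sin θ * ⟪f', y⟫ ≤ 0} :=
    measurableSet_le_and_le (by fun_prop) (by fun_prop) (by fun_prop) (by fun_prop)
  rw [luneR, luneR, ← gauss_real_preimage L hm]
  congr 1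
  ext y
  simp only [mem_ofPred_eq, mem_preimage, ← hLe, ← hLf, LinearIsometryEquiv.inner_map_map]

/-- A wedge of angle `x + z` is cut by the hyperplane orthogonal to `e' = cos x • e + sin x • f` into
wedges of angles `x` and `z`, overlapping in a null set. -/
lemma luneR_add {e f : E4} (he : ‖e‖ = 1) (hf : ‖f‖ = 1) (hef : ⟪e, f⟫ = 0) {x z : ℝ}
    (hx : 0 < x) (hz : 0 < z) (hxz : x + z ≤ Real.pi / 2) :
    luneR e f (x + z) = luneR e f x + luneR e f z := by
  have hpi := Real.pi_pos
  have sx := Real.sin_pos_of_pos_of_lt_pi hx (by linarith)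
  have sz := Real.sin_pos_of_pos_of_lt_pi hz (by linarith)
  have sxz := Real.sin_pos_of_pos_of_lt_pi (x := x + z) (by linarith) (by linarith)
  have hee : ⟪e, e⟫ = 1 := by rw [real_inner_self_eq_norm_sq, he]; norm_num
  have hff : ⟪f, f⟫ = 1 := by rw [real_inner_self_eq_norm_sq, hf]; norm_num
  have hfe : ⟪f, e⟫ = 0 := by rw [real_inner_comm]; exact hef
  have hcs := Real.cos_sq_add_sin_sq x
  set e' : E4 := Real.cos x • e + Real.sin x • f with he'
  set f' : E4 := (-Real.sin x) • e + Real.cos x • f with hf'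
  have n1 : ‖e'‖ = 1 := by
    have : ‖e'‖ ^ 2 = 1 := by
      rw [← real_inner_self_eq_norm_sq, he']
      simp only [inner_add_left, inner_add_right, inner_smul_left, inner_smul_right, hee, hff, hef, hfe]
      simp; linarith
    nlinarith [norm_nonneg e']
  have n2 : ‖f'‖ = 1 := by
    have : ‖f'‖ ^ 2 = 1 := by
      rw [← real_inner_self_eq_norm_sq, hf']
      simp only [inner_add_left, inner_add_right, inner_smul_left, inner_smul_right, hee, hff, hef, hfe]
      simp; linarith
    nlinarith [norm_nonneg f']
  have n3 : ⟪e', f'⟫ = 0 := by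
    rw [he', hf']
    simp only [inner_add_left, inner_add_right, inner_smul_left, inner_smul_right, hee, hff, hef, hfe]
    simp; ring
  rw [luneR_eq he hf hef n1 n2 n3 z]
  have ee : ∀ y : E4, ⟪e', y⟫ = Real.cos x * ⟪e, y⟫ + Real.sin x * ⟪f, y⟫ := by
    intro y; rw [he', inner_add_left, inner_smul_left, inner_smul_left]; simp
  have fe : ∀ y : E4, ⟪f', y⟫ = -Real.sin x * ⟪e, y⟫ + Real.cos x * ⟪f, y⟫ := by
    intro y; rw [hf', inner_add_left, inner_smul_left, inner_smul_left]; simp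
  have e3 : ∀ y : E4, Real.cos z * ⟪e', y⟫ + Real.sin z * ⟪f', y⟫
      = Real.cos (x + z) * ⟪e, y⟫ + Real.sin (x + z) * ⟪f, y⟫ := by
    intro y; rw [ee, fe, Real.cos_add, Real.sin_add]; ring
  -- the middle functional is a positive combination of the two outer ones
  have rel : ∀ y : E4, Real.sin z * ⟪e, y⟫ + Real.sin x * (Real.cos (x + z) * ⟪e, y⟫ + Real.sin (x + z) * ⟪f, y⟫)
      = Real.sin (x + z) * ⟪e', y⟫ := by
    intro y; rw [ee, Real.cos_add, Real.sin_add]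
    linear_combination (-Real.sin z * ⟪e, y⟫) * hcs
  rw [luneR, luneR, luneR]
  simp only [e3]
  simp only [← ee]
  rw [← measureReal_union_add_inter (t := {y : E4 | 0 ≤ ⟪e', y⟫ ∧
    Real.cos (x + z) * ⟪e, y⟫ + Real.sin (x + z) * ⟪f, y⟫ ≤ 0})]
  · have hnull : gaussE.real ({y : E4 | 0 ≤ ⟪e, y⟫ ∧ ⟪e', y⟫ ≤ 0} ∩ {y : E4 | 0 ≤ ⟪e', y⟫ ∧
        Real.cos (x + z) * ⟪e, y⟫ + Real.sin (x + z) * ⟪f, y⟫ ≤ 0}) = 0 := by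
      rw [measureReal_eq_zero_iff]
      refine measure_mono_null ?_ (gauss_hyperplane (n := e') ?_)
      · rintro y ⟨h1, h2⟩; exact le_antisymm h1.2 h2.1
      · intro h; rw [h] at n1; simp at n1
    rw [hnull, add_zero]
    congr 1
    ext y
    have r := rel y
    simp only [mem_ofPred_eq, mem_union]
    constructor
    · rintro ⟨h1, h2⟩
      rcases le_total ⟪e', y⟫ 0 with h | h
      · exact Or.inl ⟨h1, h⟩
      · exact Or.inr ⟨h, h2⟩
    · rintro (⟨h1, h2⟩ | ⟨h1, h2⟩)
      · refine ⟨h1, ?_⟩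
        by_contra hc
        push Not at hc
        nlinarith [mul_nonneg sz.le h1, mul_pos sx hc, mul_nonneg sxz.le (neg_nonneg.2 h2)]
      · refine ⟨?_, h2⟩
        by_contra hc
        push Not at hc
        nlinarith [mul_pos sz (neg_pos.2 hc), mul_nonneg sx.le (neg_nonneg.2 h2), mul_nonneg sxz.le h1]
  · exact measurableSet_le_and_le (by fun_prop) (by fun_prop) (by fun_prop) (by fun_prop)

lemma gauss_half {n : E4} (hn : n ≠ 0) : gaussE.real {y | 0 ≤ ⟪n, y⟫} = gaussE.real univ / 2 := by
  have hm : MeasurableSet {y : E4 | 0 ≤ ⟪n, y⟫} :=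
    (isClosed_le (by fun_prop) (by fun_prop)).measurableSet
  have h1 := gauss_real_preimage (LinearIsometryEquiv.neg ℝ) hm
  have h2 := measureReal_union_add_inter (μ := gaussE) (s := ⇑(LinearIsometryEquiv.neg ℝ (E := E4)) ⁻¹' {y : E4 | 0 ≤ ⟪n, y⟫}) hm
  have h3 : gaussE.real (⇑(LinearIsometryEquiv.neg ℝ (E := E4)) ⁻¹' {y : E4 | 0 ≤ ⟪n, y⟫} ∩ {y : E4 | 0 ≤ ⟪n, y⟫}) = 0 := by
    rw [measureReal_eq_zero_iff]
    refine measure_mono_null ?_ (gauss_hyperplane hn)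
    rintro y ⟨h1, h2⟩
    simp at h1 h2
    exact le_antisymm h1 h2
  have h4 : ⇑(LinearIsometryEquiv.neg ℝ (E := E4)) ⁻¹' {y : E4 | 0 ≤ ⟪n, y⟫} ∪ {y : E4 | 0 ≤ ⟪n, y⟫} = univ := by
    ext y; simp [le_total]
  rw [h4, h3] at h2
  linarith

lemma luneR_pi_div_two {e f : E4} (he : ‖e‖ = 1) (hf : ‖f‖ = 1) (hef : ⟪e, f⟫ = 0) :
    luneR e f (Real.pi / 2) = gaussE.real univ / 4 := by
  -- the wedges for `f` and `-f` are congruent and together fill a half-space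
  have h1 := luneR_eq he hf hef he (f' := -f) (by simpa using hf) (by simpa using hef) (Real.pi / 2)
  have hfm : MeasurableSet {y : E4 | 0 ≤ ⟪e, y⟫ ∧ ⟪-f, y⟫ ≤ 0} :=
    measurableSet_le_and_le (by fun_prop) (by fun_prop) (by fun_prop) (by fun_prop)
  have h2 := measureReal_union_add_inter (μ := gaussE) (s := {y : E4 | 0 ≤ ⟪e, y⟫ ∧ ⟪f, y⟫ ≤ 0}) hfm
  have h3 : gaussE.real ({y : E4 | 0 ≤ ⟪e, y⟫ ∧ ⟪f, y⟫ ≤ 0} ∩ {y : E4 | 0 ≤ ⟪e, y⟫ ∧ ⟪-f, y⟫ ≤ 0}) = 0 := by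
    rw [measureReal_eq_zero_iff]
    refine measure_mono_null ?_ (gauss_hyperplane (n := f) (by rintro rfl; simp at hf))
    rintro y ⟨h1, h2⟩
    simp at h1 h2
    exact le_antisymm h1.2 h2.2
  have h4 : {y : E4 | 0 ≤ ⟪e, y⟫ ∧ ⟪f, y⟫ ≤ 0} ∪ {y : E4 | 0 ≤ ⟪e, y⟫ ∧ ⟪-f, y⟫ ≤ 0} = {y : E4 | 0 ≤ ⟪e, y⟫} := by
    ext y
    simp only [mem_union, mem_ofPred_eq, inner_neg_left]
    constructor
    · rintro (h | h) <;> exact h.1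
    · intro h
      rcases le_total ⟪f, y⟫ 0 with h' | h'
      · exact Or.inl ⟨h, h'⟩
      · exact Or.inr ⟨h, by linarith⟩
  rw [h3, h4, gauss_half (by rintro rfl; simp at he)] at h2
  have e1 : luneR e f (Real.pi / 2) = gaussE.real {y : E4 | 0 ≤ ⟪e, y⟫ ∧ ⟪f, y⟫ ≤ 0} := by
    simp [luneR]
  have e2 : luneR e (-f) (Real.pi / 2) = gaussE.real {y : E4 | 0 ≤ ⟪e, y⟫ ∧ ⟪-f, y⟫ ≤ 0} := by
    simp [luneR]
  linarith

/-- Two half-spaces whose unit inner normals satisfy `⟪n₁, n₂⟫ = -cos θ` bound a wedge of angle `θ`,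
which carries the fraction `θ / 2π` of the Gaussian mass. -/
lemma gauss_lune {n₁ n₂ : E4} (h₁ : ‖n₁‖ = 1) (h₂ : ‖n₂‖ = 1) {θ : ℝ} (hθ : 0 < θ)
    (hθ' : θ ≤ Real.pi / 2) (h : ⟪n₁, n₂⟫ = -Real.cos θ) :
    gaussE.real {y | 0 ≤ ⟪n₁, y⟫ ∧ 0 ≤ ⟪n₂, y⟫} = gaussE.real univ * θ / (2 * Real.pi) := by
  have hpi := Real.pi_pos
  have sθ := Real.sin_pos_of_pos_of_lt_pi hθ (by linarith)
  have hcs := Real.cos_sq_add_sin_sq θ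
  set f : E4 := (Real.sin θ)⁻¹ • (-n₂ - Real.cos θ • n₁) with hf
  have h11 : ⟪n₁, n₁⟫ = 1 := by rw [real_inner_self_eq_norm_sq, h₁]; norm_num
  have h22 : ⟪n₂, n₂⟫ = 1 := by rw [real_inner_self_eq_norm_sq, h₂]; norm_num
  have h21 : ⟪n₂, n₁⟫ = -Real.cos θ := by rw [real_inner_comm]; exact h
  have hf1 : ‖f‖ = 1 := by
    have : ‖f‖ ^ 2 = 1 := by
      rw [← real_inner_self_eq_norm_sq, hf]
      simp only [inner_sub_left, inner_sub_right, inner_smul_left, inner_smul_right, inner_neg_left,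
        inner_neg_right, h11, h22, h, h21]
      simp
      field_simp
      linarith
    nlinarith [norm_nonneg f]
  have hef : ⟪n₁, f⟫ = 0 := by
    rw [hf]
    simp only [inner_sub_right, inner_smul_right, inner_neg_right, h11, h]
    ring
  have e1 : gaussE.real {y | 0 ≤ ⟪n₁, y⟫ ∧ 0 ≤ ⟪n₂, y⟫} = luneR n₁ f θ := by
    rw [luneR]
    congr 1
    ext y
    have : Real.cos θ * ⟪n₁, y⟫ + Real.sin θ * ⟪f, y⟫ = -⟪n₂, y⟫ := by
      rw [hf]
      simp only [inner_sub_left, inner_smul_left, inner_neg_left]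
      simp
      field_simp
      ring
    simp only [mem_ofPred_eq, this, neg_nonpos]
  rw [e1, linear_of_additive (f := luneR n₁ f) (A := Real.pi / 2) (by positivity)
    (fun _ _ _ => measureReal_nonneg)
    (fun x y hx hy hxy => luneR_add h₁ hf1 hef hx hy hxy) hθ hθ', luneR_pi_div_two h₁ hf1 hef]
  field_simp
  ring

/-! ### The angle-sum relation -/

/-- The polyhedral cone `⟪h j, y⟫ ≥ 0`, `j ≠ i`. If the `h j` are the gradients of the barycentric
coordinates of a simplex, this is the cone of directions at its `i`-th vertex pointing into it. -/
def vcone (h : Fin 5 → E4) (i : Fin 5) : Set E4 := {y | ∀ j, j ≠ i → 0 ≤ ⟪h j, y⟫}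

/-- For a sign pattern `b`: four times the number of `i` such that all signs other than the `i`-th
are positive, minus the number of ordered pairs of distinct positive signs, plus four. -/
def signCount (b : Fin 5 → Bool) : ℤ :=
  4 * (∑ i, if ∀ j, j ≠ i → b j = true then 1 else 0)
    - (∑ i, ∑ j, if i ≠ j then (if b i = true ∧ b j = true then 1 else 0) else 0) + 4

/-- On patterns with both signs present, `signCount` is odd under reversal of all signs. With
`k = 1, 2, 3, 4` positive signs it equals `4`, `2`, `-2`, `-4`. -/
lemma signCount_add_not : ∀ b : Fin 5 → Bool, (∃ i, b i = true) → (∃ i, b i = false) →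
    signCount b + signCount (fun i => !b i) = 0 := by
  decide +kernel

lemma isClosed_vcone (h : Fin 5 → E4) (i : Fin 5) : IsClosed (vcone h i) := by
  have : vcone h i = ⋂ j, ⋂ (_ : j ≠ i), {y | 0 ≤ ⟪h j, y⟫} := by
    ext y; simp [vcone]
  rw [this]
  exact isClosed_iInter fun j => isClosed_iInter fun _ => isClosed_le (by fun_prop) (by fun_prop)

lemma integral_eq_zero_of_odd {A : E4 → ℝ} (hAint : Integrable A gaussE)
    (hae : ∀ᵐ y ∂gaussE, A y + A (-y) = 0) : ∫ y, A y ∂gaussE = 0 := by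
  have hmp : MeasurePreserving (LinearIsometryEquiv.neg ℝ (E := E4)) gaussE gaussE :=
    ⟨(LinearIsometryEquiv.neg ℝ (E := E4)).continuous.measurable, by
      ext S hS
      rw [Measure.map_apply (LinearIsometryEquiv.neg ℝ (E := E4)).continuous.measurable hS]
      exact isoInv_gauss _ S hS⟩
  have hneg : ∫ y, A (-y) ∂gaussE = ∫ y, A y ∂gaussE := by
    have := hmp.integral_comp (LinearIsometryEquiv.neg ℝ (E := E4)).toHomeomorph.measurableEmbedding A
    simpa using this
  have hnegI : Integrable (fun y => A (-y)) gaussE :=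
    (hmp.integrable_comp_emb (LinearIsometryEquiv.neg ℝ (E := E4)).toHomeomorph.measurableEmbedding).2 hAint
  have hz : ∫ y, (A y + A (-y)) ∂gaussE = 0 := by
    rw [integral_congr_ae hae]; simp
  rw [integral_add hAint hnegI, hneg] at hz
  linarith

/-- In dimension four the sum of the vertex angles of a simplex is determined by its dihedral angles.
The function `signCount` of the signs of `⟪h j, y⟫` is odd almost everywhere, because the relation
`∑ h j = 0` forbids equal signs, so its Gaussian integral vanishes. -/
lemma sum_vcone (h : Fin 5 → E4) (hsum : ∑ i, h i = 0) (hne : ∀ i, h i ≠ 0) :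
    4 * ∑ i, gaussE.real (vcone h i) =
      (∑ i, ∑ j, if i ≠ j then gaussE.real {y | 0 ≤ ⟪h i, y⟫ ∧ 0 ≤ ⟪h j, y⟫} else 0)
        - 4 * gaussE.real univ := by
  set A : E4 → ℝ := fun y => (signCount (fun j => decide (0 ≤ ⟪h j, y⟫)) : ℝ) with hA
  set W : Fin 5 → Fin 5 → Set E4 := fun i j => {y | 0 ≤ ⟪h i, y⟫ ∧ 0 ≤ ⟪h j, y⟫} with hW
  have hWm : ∀ i j, MeasurableSet (W i j) := fun i j =>
    measurableSet_le_and_le (by fun_prop) (by fun_prop) (by fun_prop) (by fun_prop)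
  have hCm : ∀ i, MeasurableSet (vcone h i) := fun i => (isClosed_vcone h i).measurableSet
  have hAe : A = fun y => 4 * (∑ i, (vcone h i).indicator (fun _ => (1 : ℝ)) y)
      - (∑ i, ∑ j, if i ≠ j then (W i j).indicator (fun _ => (1 : ℝ)) y else 0) + 4 := by
    funext y
    have e1 : ∀ i, (vcone h i).indicator (fun _ => (1 : ℝ)) y
        = if ∀ j, j ≠ i → decide (0 ≤ ⟪h j, y⟫) = true then 1 else 0 := by
      intro i
      by_cases hy : y ∈ vcone h i
      · rw [indicator_of_mem hy, if_pos fun j hj => decide_eq_true (hy j hj)]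
      · rw [indicator_of_notMem hy, if_neg fun hc => hy fun j hj => of_decide_eq_true (hc j hj)]
    have e2 : ∀ i j, (W i j).indicator (fun _ => (1 : ℝ)) y
        = if decide (0 ≤ ⟪h i, y⟫) = true ∧ decide (0 ≤ ⟪h j, y⟫) = true then 1 else 0 := by
      intro i j
      by_cases hy : y ∈ W i j
      · rw [indicator_of_mem hy, if_pos ⟨decide_eq_true hy.1, decide_eq_true hy.2⟩]
      · rw [indicator_of_notMem hy,
          if_neg fun hc => hy ⟨of_decide_eq_true hc.1, of_decide_eq_true hc.2⟩]
    simp only [e1, e2, hA, signCount]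
    push_cast
    rfl
  have hI : ∀ S : Set E4, MeasurableSet S → Integrable (S.indicator (fun _ => (1 : ℝ))) gaussE :=
    fun S hS => (integrable_const _).indicator hS
  have hI2 : ∀ i j, Integrable (fun y => if i ≠ j then (W i j).indicator (fun _ => (1 : ℝ)) y else 0) gaussE := by
    intro i j
    by_cases hij : i = j
    · simp [hij]
    · simpa [hij] using hI _ (hWm i j)
  have i1 : Integrable (fun y => 4 * (∑ i, (vcone h i).indicator (fun _ => (1 : ℝ)) y)) gaussE :=
    (integrable_finsetSum _ fun i _ => hI _ (hCm i)).const_mul 4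
  have i2 : Integrable (fun y => ∑ i, ∑ j, if i ≠ j then (W i j).indicator (fun _ => (1 : ℝ)) y else 0) gaussE :=
    integrable_finsetSum _ fun i _ => integrable_finsetSum _ fun j _ => hI2 i j
  have hAint : Integrable A gaussE := by
    rw [hAe]; exact (i1.sub i2).add (integrable_const _)
  have hval : ∫ y, A y ∂gaussE = 4 * ∑ i, gaussE.real (vcone h i) -
      (∑ i, ∑ j, if i ≠ j then gaussE.real (W i j) else 0) + 4 * gaussE.real univ := by
    have i3 : Integrable (fun y => 4 * (∑ i, (vcone h i).indicator (fun _ => (1 : ℝ)) y)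
      - (∑ i, ∑ j, if i ≠ j then (W i j).indicator (fun _ => (1 : ℝ)) y else 0)) gaussE := i1.sub i2
    rw [hAe]
    beta_reduce
    rw [integral_add i3 (integrable_const _), integral_sub i1 i2,
      integral_const_mul, integral_finsetSum _ fun i _ => hI _ (hCm i),
      integral_finsetSum _ fun i _ => integrable_finsetSum _ fun j _ => hI2 i j]
    congr 1
    · congr 1
      · congr 1
        refine Finset.sum_congr rfl fun i _ => ?_
        exact integral_indicator_one (μ := gaussE) (hCm i)
      · refine Finset.sum_congr rfl fun i _ => ?_
        rw [integral_finsetSum _ fun j _ => hI2 i j]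
        refine Finset.sum_congr rfl fun j _ => ?_
        by_cases hij : i = j
        · simp only [hij, ne_eq, not_true_eq_false, if_false, integral_zero]
        · simp only [ne_eq, hij, not_false_eq_true, if_true]; exact integral_indicator_one (μ := gaussE) (hWm i j)
    · simp [mul_comm]
  have hae : ∀ᵐ y ∂gaussE, A y + A (-y) = 0 := by
    have h0 : ∀ᵐ y ∂gaussE, ∀ i, ⟪h i, y⟫ ≠ 0 := by
      rw [ae_all_iff]
      intro i
      rw [ae_iff]
      simpa using gauss_hyperplane (hne i)
    filter_upwards [h0] with y hy
    have hs : ∑ i, ⟪h i, y⟫ = 0 := by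
      rw [← sum_inner, hsum, inner_zero_left]
    have e : (fun j => decide (0 ≤ ⟪h j, -y⟫)) = fun j => !(decide (0 ≤ ⟪h j, y⟫)) := by
      funext j
      have := hy j
      rw [inner_neg_right]
      rcases lt_or_gt_of_ne this with h' | h'
      · simp [h'.le, h']
      · simp [h'.le, h']
    have := signCount_add_not (fun j => decide (0 ≤ ⟪h j, y⟫)) ?_ ?_
    · simp only [hA]
      rw [e]
      exact_mod_cast this
    · by_contra hc
      push Not at hc
      have : ∑ i, ⟪h i, y⟫ < 0 := Finset.sum_neg (fun i _ => by simpa using hc i) Finset.univ_nonempty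
      linarith
    · by_contra hc
      push Not at hc
      have : 0 < ∑ i, ⟪h i, y⟫ := Finset.sum_pos (fun i _ => by
        have := hc i
        simp at this
        exact lt_of_le_of_ne this (hy i).symm) Finset.univ_nonempty
      linarith
  have := integral_eq_zero_of_odd hAint hae
  rw [hval] at this
  linarith

/-- `gauss_lune` for normals of arbitrary length. -/
lemma gauss_wedge {u v : E4} (hu : u ≠ 0) (hv : v ≠ 0) {c : ℝ} (hc : ⟪u, v⟫ = -c * (‖u‖ * ‖v‖))
    (h0 : 0 ≤ c) (h1 : c < 1) :
    gaussE.real {y | 0 ≤ ⟪u, y⟫ ∧ 0 ≤ ⟪v, y⟫} = gaussE.real univ * Real.arccos c / (2 * Real.pi) := by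
  have pu : 0 < ‖u‖ := norm_pos_iff.2 hu
  have pv : 0 < ‖v‖ := norm_pos_iff.2 hv
  rw [← gauss_lune (n₁ := ‖u‖⁻¹ • u) (n₂ := ‖v‖⁻¹ • v) (by simp [norm_smul, hu]) (by simp [norm_smul, hv])
    (Real.arccos_pos.2 h1) (Real.arccos_le_pi_div_two.2 h0)]
  · congr 1
    ext y
    simp only [mem_ofPred_eq, inner_smul_left]
    simp [mul_nonneg_iff_of_pos_left, pu, pv]
  · rw [Real.cos_arccos (by linarith) h1.le, inner_smul_left, inner_smul_right, hc]
    simp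
    field_simp

lemma sum_vcone_arccos (h : Fin 5 → E4) (hsum : ∑ i, h i = 0) (hne : ∀ i, h i ≠ 0)
    (c : Fin 5 → Fin 5 → ℝ) (hc : ∀ i j, i ≠ j → ⟪h i, h j⟫ = -c i j * (‖h i‖ * ‖h j‖))
    (h0 : ∀ i j, i ≠ j → 0 ≤ c i j) (h1 : ∀ i j, i ≠ j → c i j < 1) :
    4 * ∑ i, gaussE.real (vcone h i) =
      gaussE.real univ / (2 * Real.pi) * (∑ i, ∑ j, if i ≠ j then Real.arccos (c i j) else 0)
        - 4 * gaussE.real univ := by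
  rw [sum_vcone h hsum hne, Finset.mul_sum]
  congr 1
  refine Finset.sum_congr rfl fun i _ => ?_
  rw [Finset.mul_sum]
  refine Finset.sum_congr rfl fun j _ => ?_
  by_cases hij : i = j
  · simp [hij]
  · rw [if_pos hij, if_pos hij, gauss_wedge (hne i) (hne j) (hc i j hij) (h0 i j hij) (h1 i j hij)]
    ring

/-! ### Metric estimates for nearly regular simplices -/

/-- Solution to first order of the linear equation `H = 2 Π + B H`, where `Π` is the projection
orthogonal to `(1, …, 1)`, for a small matrix `B` with vanishing row sums: `H = 2 Π + 2 B + O(s²)`. -/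
lemma gram_est {H B : Fin 5 → Fin 5 → ℝ} {s : ℝ} (hs0 : 0 ≤ s) (hs : s ≤ 1 / 100)
    (hB : ∀ i j, |B i j| ≤ 3 * s) (hBs : ∀ i, ∑ j, B i j = 0)
    (hH : ∀ i k, H i k = 2 * ((if i = k then 1 else 0) - 1 / 5) + ∑ j, B i j * H j k) (i k : Fin 5) :
    |H i k - 2 * ((if i = k then 1 else 0) - 1 / 5) - 2 * B i k| ≤ 450 * s ^ 2 := by
  have hsumB : ∀ (X : Fin 5 → ℝ) (c : ℝ) (i : Fin 5), (∀ j, |X j| ≤ c) →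
      |∑ j, B i j * X j| ≤ 15 * s * c := by
    intro X c i hX
    calc |∑ j, B i j * X j| ≤ ∑ j, |B i j * X j| := Finset.abs_sum_le_sum_abs _ _
      _ ≤ ∑ _j : Fin 5, 3 * s * c := by
          refine Finset.sum_le_sum fun j _ => ?_
          rw [abs_mul]
          exact mul_le_mul (hB i j) (hX j) (abs_nonneg _) (by positivity)
      _ = 15 * s * c := by simp; ring
  have hPi : ∀ i k : Fin 5, |2 * ((if i = k then (1 : ℝ) else 0) - 1 / 5)| ≤ 8 / 5 := by
    intro i k
    split_ifs <;> norm_num [abs_le]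
  obtain ⟨⟨i₀, k₀⟩, hmax⟩ := Finite.exists_max (fun q : Fin 5 × Fin 5 => |H q.1 q.2|)
  -- at the largest entry of `H`, the equation bounds `H` by `8/5 + 15 s |H|`
  have hbd : |H i₀ k₀| ≤ 2 := by
    have h1 := hsumB (fun j => H j k₀) _ i₀ (fun j => hmax (j, k₀))
    have h2 := abs_add_le (2 * ((if i₀ = k₀ then (1 : ℝ) else 0) - 1 / 5)) (∑ j, B i₀ j * H j k₀)
    rw [← hH] at h2
    have h3 := hPi i₀ k₀
    simp only at h1
    nlinarith [abs_nonneg (H i₀ k₀)]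
  have hall : ∀ i k, |H i k| ≤ 2 := fun i k => (hmax (i, k)).trans hbd
  -- two rounds of substituting the bound back into the equation
  have h30 : ∀ i k, |H i k - 2 * ((if i = k then 1 else 0) - 1 / 5)| ≤ 30 * s := by
    intro i k
    have h1 := hsumB (fun j => H j k) 2 i (fun j => hall j k)
    rw [hH i k, add_sub_cancel_left]
    linarith
  have h2 := hsumB (fun j => H j k - 2 * ((if j = k then 1 else 0) - 1 / 5)) _ i (fun j => h30 j k)
  have e : ∑ j, B i j * (H j k - 2 * ((if j = k then 1 else 0) - 1 / 5))
      = H i k - 2 * ((if i = k then 1 else 0) - 1 / 5) - 2 * B i k := by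
    have e1 : ∀ j, B i j * (H j k - 2 * ((if j = k then 1 else 0) - 1 / 5))
        = B i j * H j k - 2 * (if j = k then B i j else 0) + 2 / 5 * B i j := by
      intro j; split_ifs <;> ring
    simp only [e1, Finset.sum_add_distrib, Finset.sum_sub_distrib, ← Finset.mul_sum, hBs]
    rw [hH i k]
    simp
  rw [e] at h2
  nlinarith

/-- The equation of `gram_est` for the Gram matrix of the gradients `h` of the barycentric
coordinates of a simplex `V` with squared edge lengths `1 + p j k`: here `B` is `p` with a row and a
column mean subtracted. It comes from expanding `⟪h k, V i - V l⟫` by polarisation and summing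
over `l`. -/
lemma gram_dual {V h : Fin 5 → E4} {p : Fin 5 → Fin 5 → ℝ} (hsum : ∑ i, h i = 0)
    (hexp : ∀ x, x = ∑ j, ⟪h j, x⟫ • V j)
    (hd : ∀ i j k, ⟪h i, V j - V k⟫ = (if i = j then 1 else 0) - (if i = k then 1 else 0))
    (hp : ∀ j k, ‖V j - V k‖ ^ 2 = (if j = k then 0 else 1) + p j k) (i k : Fin 5) :
    ⟪h i, h k⟫ = 2 * ((if i = k then 1 else 0) - 1 / 5)
      + ∑ j, (p i j - ((∑ l, p i l) + ∑ l, p j l) / 5) * ⟪h j, h k⟫ := by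
  have hHs : ∑ j, ⟪h j, h k⟫ = 0 := by rw [← sum_inner, hsum, inner_zero_left]
  have hsymm : ∀ i j, p i j = p j i := by
    intro i j
    have h1 := hp i j
    have h2 := hp j i
    rw [norm_sub_rev] at h1
    rw [h1] at h2
    simp only [eq_comm (a := i)] at h2
    linarith
  have key : ∀ l, 2 * ((if k = i then 1 else 0) - (if k = l then 1 else 0))
      = ∑ j, ⟪h j, h k⟫ * (((if j = l then 0 else 1) + p j l) - ((if j = i then 0 else 1) + p j i)) := by
    intro l
    rw [← hd k i l]
    conv_lhs => rw [hexp (h k)]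
    rw [sum_inner, Finset.mul_sum]
    have e : ∀ j, 2 * ⟪⟪h j, h k⟫ • V j, V i - V l⟫ = ⟪h j, h k⟫ *
        (((if j = l then 0 else 1) + p j l) - ((if j = i then 0 else 1) + p j i))
        + (‖V i‖ ^ 2 - ‖V l‖ ^ 2) * ⟪h j, h k⟫ := by
      intro j
      rw [← hp, ← hp, norm_sub_sq_real, norm_sub_sq_real, real_inner_smul_left, inner_sub_right]
      ring
    rw [Finset.sum_congr rfl fun j _ => e j, Finset.sum_add_distrib, ← Finset.mul_sum, hHs]
    ring
  have hsumkey := Finset.sum_congr (rfl : (Finset.univ : Finset (Fin 5)) = Finset.univ) fun l _ => key l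
  rw [Finset.sum_comm] at hsumkey
  have e2 : ∀ j, ∑ l, ⟪h j, h k⟫ * (((if j = l then 0 else 1) + p j l) - ((if j = i then 0 else 1) + p j i))
      = 5 * (if j = i then ⟪h j, h k⟫ else 0) + (∑ l, p j l) * ⟪h j, h k⟫ - 5 * (p i j * ⟪h j, h k⟫)
        - ⟪h j, h k⟫ := by
    intro j
    have e3 : ∀ l, (if j = l then (0 : ℝ) else 1) = 1 - if j = l then 1 else 0 := by
      intro l; split_ifs <;> norm_num
    rw [← Finset.mul_sum, Finset.sum_sub_distrib, Finset.sum_add_distrib]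
    simp only [e3, Finset.sum_sub_distrib, Finset.sum_const, Finset.sum_ite_eq, Finset.mem_univ, if_true]
    rw [hsymm i j]
    split_ifs <;> simp <;> ring
  rw [Finset.sum_congr rfl fun j _ => e2 j] at hsumkey
  simp only [Finset.sum_sub_distrib, Finset.sum_add_distrib, ← Finset.mul_sum, Finset.sum_ite_eq,
    Finset.sum_ite_eq', Finset.mem_univ, if_true, hHs, Finset.sum_const] at hsumkey
  have e4 : ∀ j, (p i j - ((∑ l, p i l) + ∑ l, p j l) / 5) * ⟪h j, h k⟫
      = p i j * ⟪h j, h k⟫ - ((∑ l, p i l) / 5) * ⟪h j, h k⟫ - 1 / 5 * ((∑ l, p j l) * ⟪h j, h k⟫) := by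
    intro j; ring
  simp only [e4, Finset.sum_sub_distrib, ← Finset.mul_sum, hHs]
  simp only [eq_comm (a := k) (b := i)] at hsumkey
  simp at hsumkey ⊢
  split_ifs at hsumkey ⊢ <;> linarith

/-- Concavity of `arccos` on `[0, 1/2]`, in the quantitative form of a tangent-line bound at `1/4`
with a quadratic gain. -/
lemma arccos_le_quad {y : ℝ} (h0 : 0 ≤ y) (h1 : y ≤ 1 / 2) :
    Real.arccos y ≤ Real.arccos (1 / 4) - (√(15 / 16))⁻¹ * (y - 1 / 4) - 1 / 100 * (y - 1 / 4) ^ 2 := by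
  set a := (√(15 / 16 : ℝ))⁻¹ with ha
  set g : ℝ → ℝ := fun y => Real.arccos y + a * (y - 1 / 4) + 1 / 100 * (y - 1 / 4) ^ 2 with hg
  have hder : ∀ x ∈ Icc (0 : ℝ) (1 / 2), HasDerivAt g (-(1 / √(1 - x ^ 2)) + a + 1 / 50 * (x - 1 / 4)) x := by
    intro x hx
    have d1 := Real.hasDerivAt_arccos (x := x) (by linarith [hx.1]) (by linarith [hx.2])
    have d2 := ((hasDerivAt_id x).sub_const (1 / 4)).const_mul a
    have d3 := (((hasDerivAt_id x).sub_const (1 / 4)).pow 2).const_mul (1 / 100)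
    refine ((d1.add d2).add d3).congr_deriv ?_
    simp; ring
  have hk0 : 0 < √(15 / 16 : ℝ) := by positivity
  have hk0s : √(15 / 16 : ℝ) ^ 2 = 15 / 16 := Real.sq_sqrt (by norm_num)
  have hk01 : √(15 / 16 : ℝ) ≤ 1 := by rw [Real.sqrt_le_one]; norm_num
  have hcont : ContinuousOn g (Icc 0 (1 / 2)) := fun x hx => (hder x hx).continuousAt.continuousWithinAt
  have hk : ∀ x ∈ Icc (0 : ℝ) (1 / 2), 0 < √(1 - x ^ 2) ∧ √(1 - x ^ 2) ≤ 1 ∧ √(1 - x ^ 2) ^ 2 = 1 - x ^ 2 := by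
    intro x hx
    have : 0 < 1 - x ^ 2 := by nlinarith [hx.1, hx.2]
    refine ⟨Real.sqrt_pos.2 this, ?_, Real.sq_sqrt this.le⟩
    rw [Real.sqrt_le_one]; nlinarith [hx.1]
  suffices g y ≤ g (1 / 4) by
    simp only [hg] at this
    norm_num at this ⊢
    linarith
  rcases le_total (1 / 4) y with h | h
  · have : AntitoneOn g (Icc (1 / 4) (1 / 2)) := by
      refine antitoneOn_of_deriv_nonpos (convex_Icc _ _) (hcont.mono (Icc_subset_Icc_left (by norm_num))) ?_ ?_
      · intro x hx
        rw [interior_Icc] at hx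
        exact (hder x ⟨by linarith [hx.1], hx.2.le⟩).differentiableAt.differentiableWithinAt
      · intro x hx
        rw [interior_Icc] at hx
        have hx' : x ∈ Icc (0 : ℝ) (1 / 2) := ⟨by linarith [hx.1], hx.2.le⟩
        rw [(hder x hx').deriv]
        obtain ⟨k1, k2, k3⟩ := hk x hx'
        set k := √(1 - x ^ 2)
        set k0 := √(15 / 16 : ℝ)
        have hkk : k ≤ k0 := by nlinarith [hx.1]
        have e : -(1 / k) + a = -((k0 - k) / (k * k0)) := by rw [ha]; field_simp; ring
        rw [e]
        have l1 : k0 - k ≤ (k0 - k) / (k * k0) := by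
          rw [le_div_iff₀ (by positivity)]
          nlinarith [mul_le_one₀ k2 hk0.le hk01, mul_nonneg (sub_nonneg.2 hkk) (sub_nonneg.2 (mul_le_one₀ k2 hk0.le hk01))]
        have l2 : (x ^ 2 - 1 / 16) / 2 ≤ k0 - k := by nlinarith
        nlinarith [hx.1]
    exact this ⟨by norm_num, by norm_num⟩ ⟨h, h1⟩ h
  · have : MonotoneOn g (Icc 0 (1 / 4)) := by
      refine monotoneOn_of_deriv_nonneg (convex_Icc _ _) (hcont.mono (Icc_subset_Icc_right (by norm_num))) ?_ ?_
      · intro x hx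
        rw [interior_Icc] at hx
        exact (hder x ⟨hx.1.le, by linarith [hx.2]⟩).differentiableAt.differentiableWithinAt
      · intro x hx
        rw [interior_Icc] at hx
        have hx' : x ∈ Icc (0 : ℝ) (1 / 2) := ⟨hx.1.le, by linarith [hx.2]⟩
        rw [(hder x hx').deriv]
        obtain ⟨k1, k2, k3⟩ := hk x hx'
        set k := √(1 - x ^ 2)
        set k0 := √(15 / 16 : ℝ)
        have hkk : k0 ≤ k := by nlinarith [hx.1, hx.2]
        have e : -(1 / k) + a = (k - k0) / (k * k0) := by rw [ha]; field_simp; ring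
        rw [e]
        have l1 : k - k0 ≤ (k - k0) / (k * k0) := by
          rw [le_div_iff₀ (by positivity)]
          nlinarith [mul_nonneg (sub_nonneg.2 hkk) (sub_nonneg.2 (mul_le_one₀ k2 hk0.le hk01))]
        have l2 : (1 / 16 - x ^ 2) / 2 ≤ k - k0 := by nlinarith
        nlinarith [hx.1, hx.2]
    exact this ⟨h0, h⟩ ⟨by norm_num, le_rfl⟩ h

/-- The sum of the dihedral angles of a nearly regular simplex. The first-order term of the tangent
line at `1/4` is `∑ (c i j - 1/4) = -‖∑ n i‖²`, for the unit normals `n i = h i / ‖h i‖`; since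
`∑ h i = 0` and the lengths `‖h i‖` agree up to `O(E)`, it is `O(E²)`. -/
lemma sum_arccos_le (h : Fin 5 → E4) (hsum : ∑ i, h i = 0) {E : ℝ} (hE1 : E ≤ 1 / 10)
    (hdiag : ∀ i, |‖h i‖ ^ 2 - 8 / 5| ≤ E) (c : Fin 5 → Fin 5 → ℝ)
    (hc : ∀ i j, i ≠ j → ⟪h i, h j⟫ = -c i j * (‖h i‖ * ‖h j‖))
    (h0 : ∀ i j, i ≠ j → 0 ≤ c i j) (h1 : ∀ i j, i ≠ j → c i j ≤ 1 / 2) :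
    (∑ i, ∑ j, if i ≠ j then Real.arccos (c i j) else 0) ≤
      20 * Real.arccos (1 / 4) + 100 * E ^ 2
        - 1 / 100 * ∑ i, ∑ j, if i ≠ j then (c i j - 1 / 4) ^ 2 else 0 := by
  have hE0 : 0 ≤ E := (abs_nonneg _).trans (hdiag 0)
  set a := (√(15 / 16 : ℝ))⁻¹ with ha
  have ha0 : 0 ≤ a := by positivity
  have ha2 : a ≤ 2 := by
    rw [ha, inv_le_comm₀ (by positivity) (by norm_num)]
    exact Real.le_sqrt_of_sq_le (by norm_num)
  have hx : ∀ i, 1 ≤ ‖h i‖ ∧ ‖h i‖ ≤ 7 / 5 := by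
    intro i
    have := abs_le.1 (hdiag i)
    constructor <;> nlinarith [norm_nonneg (h i)]
  set x₀ := √(8 / 5 : ℝ) with hx₀
  have hx₀s : x₀ ^ 2 = 8 / 5 := Real.sq_sqrt (by norm_num)
  have hx₀1 : 1 ≤ x₀ := Real.one_le_sqrt.2 (by norm_num)
  have hinv : ∀ i, |‖h i‖⁻¹ - x₀⁻¹| ≤ E := by
    intro i
    have hi := (hx i).1
    have e : ‖h i‖⁻¹ - x₀⁻¹ = -(‖h i‖ ^ 2 - 8 / 5) / (‖h i‖ * x₀ * (‖h i‖ + x₀)) := by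
      rw [← hx₀s]
      field_simp
      ring
    rw [e, abs_div, abs_neg, div_le_iff₀ (by positivity)]
    have hb : (1 : ℝ) ≤ |‖h i‖ * x₀ * (‖h i‖ + x₀)| := by
      refine le_trans ?_ (le_abs_self _)
      have : 1 ≤ ‖h i‖ * x₀ := one_le_mul_of_one_le_of_one_le hi hx₀1
      nlinarith
    nlinarith [hdiag i]
  set n : Fin 5 → E4 := fun i => ‖h i‖⁻¹ • h i with hn
  have hN : ‖∑ i, n i‖ ≤ 7 * E := by
    have e : ∑ i, n i = ∑ i, (‖h i‖⁻¹ - x₀⁻¹) • h i := by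
      simp only [hn, sub_smul, Finset.sum_sub_distrib, ← Finset.smul_sum, hsum]
      simp
    rw [e]
    refine (norm_sum_le _ _).trans ?_
    calc ∑ i, ‖(‖h i‖⁻¹ - x₀⁻¹) • h i‖ ≤ ∑ _i : Fin 5, E * (7 / 5) := by
          refine Finset.sum_le_sum fun i _ => ?_
          rw [norm_smul, Real.norm_eq_abs]
          exact mul_le_mul (hinv i) (hx i).2 (norm_nonneg _) hE0
      _ = 7 * E := by simp; ring
  have hN2 : ‖∑ i, n i‖ ^ 2 = -∑ i, ∑ j, if i ≠ j then (c i j - 1 / 4) else 0 := by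
    have e : ∀ i j, ⟪n i, n j⟫ = (if i = j then 5 / 4 else 0) - 1 / 4 - (if i ≠ j then (c i j - 1 / 4) else 0) := by
      intro i j
      have hi := (hx i).1
      have hj := (hx j).1
      simp only [hn, real_inner_smul_left, real_inner_smul_right]
      by_cases hij : i = j
      · subst hij
        rw [real_inner_self_eq_norm_sq]
        simp
        field_simp
        norm_num
      · simp only [hij, ne_eq, not_false_eq_true, if_true, if_false]
        rw [hc i j hij]
        field_simp
        ring
    rw [← real_inner_self_eq_norm_sq, sum_inner]
    simp only [inner_sum, e, Finset.sum_sub_distrib]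
    simp
    norm_num
  have hterm : (∑ i, ∑ j, if i ≠ j then Real.arccos (c i j) else 0) ≤
      ∑ i : Fin 5, ∑ j : Fin 5, ((if i ≠ j then Real.arccos (1 / 4) else 0) - a * (if i ≠ j then (c i j - 1 / 4) else 0)
        - 1 / 100 * (if i ≠ j then (c i j - 1 / 4) ^ 2 else 0)) := by
    refine Finset.sum_le_sum fun i _ => Finset.sum_le_sum fun j _ => ?_
    by_cases hij : i = j
    · simp [hij]
    · simp only [ne_eq, hij, not_false_eq_true, if_true]
      exact arccos_le_quad (h0 i j hij) (h1 i j hij)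
  have hcount : (∑ i : Fin 5, ∑ j : Fin 5, if i ≠ j then Real.arccos (1 / 4) else 0) = 20 * Real.arccos (1 / 4) := by
    simp [Fin.sum_univ_succ]
    ring
  simp only [Finset.sum_sub_distrib, ← Finset.mul_sum] at hterm
  rw [hcount] at hterm
  have hq : ‖∑ i, n i‖ ^ 2 ≤ 50 * E ^ 2 := by nlinarith [norm_nonneg (∑ i, n i)]
  have hq0 : 0 ≤ ‖∑ i, n i‖ ^ 2 := by positivity
  nlinarith

/-! ### Bounds for the sum of the vertex angles -/

/-- A nondegenerate simplex `V` together with its metric data: `h` consists of the gradients of its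
barycentric coordinates (`hsum`, `hexp` and `hd` are the relations that this gives), and `p`
records the deviation of its squared edge lengths from `1`. Thus `p = 0` means that `V` is regular
with unit edges. -/
structure Cfg (V h : Fin 5 → E4) (p : Fin 5 → Fin 5 → ℝ) : Prop where
  hsum : ∑ i, h i = 0
  hexp : ∀ x, x = ∑ j, ⟪h j, x⟫ • V j
  hd : ∀ i j k, ⟪h i, V j - V k⟫ = (if i = j then 1 else 0) - (if i = k then 1 else 0)
  hp : ∀ j k, ‖V j - V k‖ ^ 2 = (if j = k then 0 else 1) + p j k

lemma Cfg.diag {V h : Fin 5 → E4} {p : Fin 5 → Fin 5 → ℝ} (C : Cfg V h p) (i : Fin 5) : p i i = 0 := by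
  have := C.hp i i
  simp at this
  exact this.symm

lemma Cfg.symm {V h : Fin 5 → E4} {p : Fin 5 → Fin 5 → ℝ} (C : Cfg V h p) (i j : Fin 5) :
    p i j = p j i := by
  have h1 := C.hp i j
  have h2 := C.hp j i
  rw [norm_sub_rev] at h1
  rw [h1] at h2
  simp only [eq_comm (a := i)] at h2
  linarith

lemma Cfg.ne_zero {V h : Fin 5 → E4} {p : Fin 5 → Fin 5 → ℝ} (C : Cfg V h p) (i : Fin 5) : h i ≠ 0 := by
  intro h0
  have := C.hd i i (i + 1)
  rw [h0, inner_zero_left] at this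
  have hi : i ≠ i + 1 := by simp
  simp [hi] at this

/-- The Gram matrix of the gradients to first order. Its diagonal differs from `8/5` only by the row
sums of `p` and by `O(s²)`, whereas its off-diagonal entries see `p i j` itself. -/
lemma Cfg.gram_close {V h : Fin 5 → E4} {p : Fin 5 → Fin 5 → ℝ} (C : Cfg V h p)
    (hps : ∑ i, ∑ j, p i j = 0) {s M : ℝ} (hs0 : 0 ≤ s) (hs : s ≤ 1 / 100)
    (hps' : ∀ i j, |p i j| ≤ s) (hM : ∀ i, |∑ j, p i j| ≤ M) :
    (∀ i, |‖h i‖ ^ 2 - 8 / 5| ≤ 4 / 5 * M + 450 * s ^ 2) ∧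
    ∀ i j, i ≠ j → |⟪h i, h j⟫ + 2 / 5 - 2 * p i j| ≤ 4 / 5 * M + 450 * s ^ 2 := by
  have hP5 : ∀ i, |∑ j, p i j| ≤ 5 * s := by
    intro i
    refine (Finset.abs_sum_le_sum_abs _ _).trans ((Finset.sum_le_sum fun j _ => hps' i j).trans ?_)
    simp
  have hg := gram_est (H := fun i j => ⟪h i, h j⟫)
    (B := fun i j => p i j - ((∑ l, p i l) + ∑ l, p j l) / 5) hs0 hs ?_ ?_
    (gram_dual C.hsum C.hexp C.hd C.hp)
  · constructor
    · intro i
      have h1 := abs_le.1 (hg i i)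
      have h2 := abs_le.1 (hM i)
      simp only [if_true, C.diag, real_inner_self_eq_norm_sq] at h1
      rw [abs_le]
      constructor <;> linarith
    · intro i j hij
      have h1 := abs_le.1 (hg i j)
      have h2 := abs_le.1 (hM i)
      have h3 := abs_le.1 (hM j)
      simp only [hij, if_false] at h1
      rw [abs_le]
      constructor <;> linarith
  · intro i j
    have h1 := abs_le.1 (hP5 i)
    have h2 := abs_le.1 (hP5 j)
    have h3 := abs_le.1 (hps' i j)
    rw [abs_le]
    constructor <;> linarith
  · intro i
    rw [Finset.sum_sub_distrib, ← Finset.sum_div, Finset.sum_add_distrib, hps]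
    simp

lemma Cfg.sum_vcone_eq {V h : Fin 5 → E4} (C : Cfg V h 0) :
    4 * ∑ i, gaussE.real (vcone h i) =
      gaussE.real univ / (2 * Real.pi) * (20 * Real.arccos (1 / 4)) - 4 * gaussE.real univ := by
  have hg := gram_dual C.hsum C.hexp C.hd C.hp
  simp only [Pi.zero_apply, Finset.sum_const_zero, add_zero, zero_div, sub_zero, zero_mul] at hg
  rw [sum_vcone_arccos h C.hsum C.ne_zero (fun _ _ => 1 / 4) ?_ ?_ ?_]
  · congr 2
    simp [Fin.sum_univ_succ]
    ring
  · intro i j hij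
    have e : ∀ k, ‖h k‖ = √(8 / 5) := by
      intro k
      have := hg k k
      rw [real_inner_self_eq_norm_sq] at this
      rw [← Real.sqrt_sq (norm_nonneg (h k)), this]
      norm_num
    rw [hg, e, e, Real.mul_self_sqrt (by norm_num)]
    simp [hij]
    norm_num
  · intros; norm_num
  · intros; norm_num

/-- Upper bounds for the sum of the vertex angles in terms of the size `s` of `p` and a bound `M` for
its row sums. The sum never exceeds the regular value by more than `O(E²)`; if `E` is small compared
with `s = max |p i j|`, the quadratic gain in `sum_arccos_le` makes it smaller by a multiple
of `s²`. -/
lemma Cfg.sum_vcone_le {V h : Fin 5 → E4} {p : Fin 5 → Fin 5 → ℝ} (C : Cfg V h p)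
    (hps : ∑ i, ∑ j, p i j = 0) {s M E : ℝ} (hs0 : 0 ≤ s) (hs : s ≤ 1 / 100)
    (hps' : ∀ i j, |p i j| ≤ s) (hM : ∀ i, |∑ j, p i j| ≤ M)
    (hE : E = 4 / 5 * M + 450 * s ^ 2) (hE1 : E ≤ 1 / 10) :
    4 * ∑ i, gaussE.real (vcone h i) ≤ gaussE.real univ / (2 * Real.pi) *
        (20 * Real.arccos (1 / 4) + 100 * E ^ 2) - 4 * gaussE.real univ ∧
    ((∃ i j, |p i j| = s) → E ≤ s / 5 →
      4 * ∑ i, gaussE.real (vcone h i) ≤ gaussE.real univ / (2 * Real.pi) *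
        (20 * Real.arccos (1 / 4) + 100 * E ^ 2 - s ^ 2 / 100) - 4 * gaussE.real univ) := by
  obtain ⟨hdiag, hoff⟩ := C.gram_close hps hs0 hs hps' hM
  rw [← hE] at hdiag hoff
  set c : Fin 5 → Fin 5 → ℝ := fun i j => -⟪h i, h j⟫ / (‖h i‖ * ‖h j‖) with hcdef
  have hn : ∀ i, 0 < ‖h i‖ := fun i => norm_pos_iff.2 (C.ne_zero i)
  have hn2 : ∀ i j, 8 / 5 - E ≤ ‖h i‖ * ‖h j‖ ∧ ‖h i‖ * ‖h j‖ ≤ 8 / 5 + E := by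
    intro i j
    have h1 := abs_le.1 (hdiag i)
    have h2 := abs_le.1 (hdiag j)
    constructor
    · refine le_of_sq_le_sq ?_ (by have := hn i; have := hn j; positivity)
      rw [mul_pow]
      have : 0 ≤ 8 / 5 - E := by linarith
      nlinarith
    · nlinarith [sq_nonneg (‖h i‖ - ‖h j‖)]
  have hc : ∀ i j, i ≠ j → ⟪h i, h j⟫ = -c i j * (‖h i‖ * ‖h j‖) := by
    intro i j _
    have h1 := hn i
    have h2 := hn j
    simp only [hcdef]
    field_simp
  have h0 : ∀ i j, i ≠ j → 0 ≤ c i j := by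
    intro i j hij
    have h1 := abs_le.1 (hoff i j hij)
    have h2 := abs_le.1 (hps' i j)
    have := hn i
    have := hn j
    refine div_nonneg ?_ (by positivity)
    linarith
  have h1 : ∀ i j, i ≠ j → c i j ≤ 1 / 2 := by
    intro i j hij
    have h1 := abs_le.1 (hoff i j hij)
    have h2 := abs_le.1 (hps' i j)
    have := hn i
    have := hn j
    have := hn2 i j
    simp only [hcdef]
    rw [div_le_iff₀ (by positivity)]
    linarith
  have key := sum_arccos_le h C.hsum hE1 hdiag c hc h0 h1
  rw [sum_vcone_arccos h C.hsum C.ne_zero c hc h0 fun i j hij => (h1 i j hij).trans_lt (by norm_num)]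
  have hT : 0 ≤ gaussE.real univ / (2 * Real.pi) := by have := Real.pi_pos; positivity
  constructor
  · refine sub_le_sub_right (mul_le_mul_of_nonneg_left ?_ hT) _
    have : 0 ≤ ∑ i, ∑ j, if i ≠ j then (c i j - 1 / 4) ^ 2 else 0 :=
      Finset.sum_nonneg fun i _ => Finset.sum_nonneg fun j _ => by split_ifs <;> positivity
    linarith
  · rintro ⟨i, j, hij⟩ hEs
    refine sub_le_sub_right (mul_le_mul_of_nonneg_left ?_ hT) _
    suffices s ^ 2 ≤ ∑ i, ∑ j, if i ≠ j then (c i j - 1 / 4) ^ 2 else 0 by linarith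
    by_cases hne : i = j
    · subst hne
      rw [C.diag, abs_zero] at hij
      rw [← hij]
      simp only [ne_eq, OfNat.ofNat_ne_zero, not_false_eq_true, zero_pow]
      exact Finset.sum_nonneg fun i _ => Finset.sum_nonneg fun j _ => by split_ifs <;> positivity
    · have hnn : ∀ i j : Fin 5, 0 ≤ (if i ≠ j then (c i j - 1 / 4) ^ 2 else 0) :=
        fun i j => by split_ifs <;> positivity
      refine le_trans ?_ (Finset.single_le_sum (f := fun i => ∑ j, if i ≠ j then (c i j - 1 / 4) ^ 2 else 0)
        (fun i _ => Finset.sum_nonneg fun j _ => hnn i j) (Finset.mem_univ i))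
      refine le_trans ?_ (Finset.single_le_sum (f := fun j => if i ≠ j then (c i j - 1 / 4) ^ 2 else 0)
        (fun j _ => hnn i j) (Finset.mem_univ j))
      simp only [ne_eq, hne, not_false_eq_true, if_true]
      have h1 := abs_le.1 (hoff i j hne)
      obtain ⟨h3, h4⟩ := hn2 i j
      have hpi := hn i
      have hpj := hn j
      rw [← sq_abs (c i j - 1 / 4)]
      refine pow_le_pow_left₀ hs0 ?_ 2
      have e : c i j - 1 / 4 = (-⟪h i, h j⟫ - ‖h i‖ * ‖h j‖ / 4) / (‖h i‖ * ‖h j‖) := by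
        simp only [hcdef]
        field_simp
      rw [e, abs_div, abs_of_pos (mul_pos hpi hpj), le_div_iff₀ (by positivity)]
      have h5 : s * (‖h i‖ * ‖h j‖) ≤ s * 1.7 := mul_le_mul_of_nonneg_left (by linarith) hs0
      refine h5.trans ?_
      rcases abs_cases (p i j) with ⟨h6, h7⟩ | ⟨h6, h7⟩
      · refine le_trans ?_ (neg_le_abs _)
        linarith
      · refine le_trans ?_ (le_abs_self _)
        linarith

/-! ### Orthant integrals to first order -/

/-- The closed positive orthant. -/
def orth : Set E4 := {x | ∀ a, 0 ≤ x a}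

lemma isClosed_orth : IsClosed orth := by
  have : orth = ⋂ a, {x : E4 | 0 ≤ x a} := by ext; simp [orth]
  rw [this]
  exact isClosed_iInter fun a => isClosed_le (by fun_prop) (by fun_prop)

/-- The quadratic form `‖∑ x a • e a‖ ^ 2`, where `e a` are the four edges issuing from a vertex of
the regular simplex with unit edges (so `⟪e a, e b⟫ = 1/2` for `a ≠ b`). -/
noncomputable def Q0 (x : E4) : ℝ := ((∑ a, x a ^ 2) + (∑ a, x a) ^ 2) / 2

lemma continuous_Q0 : Continuous Q0 := by unfold Q0; fun_prop

lemma norm_sq_le_of_orth {x : E4} (hx : x ∈ orth) : ‖x‖ ^ 2 ≤ (∑ a, x a) ^ 2 := by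
  have h : ∀ a, 0 ≤ x a := hx
  rw [EuclideanSpace.real_norm_sq_eq]
  exact Finset.sum_sq_le_sq_sum_of_nonneg (fun a _ => h a)

lemma integrable_gauss_quarter : Integrable (fun x : E4 => Real.exp (-(‖x‖ ^ 2 / 4))) := by
  have := integrable_gauss.comp_smul (R := (1 / 2 : ℝ)) (by norm_num)
  refine this.congr (Filter.Eventually.of_forall fun x => ?_)
  simp only [norm_smul]
  norm_num
  ring

/-- Second-order Taylor remainder of `exp (-d)`. -/
lemma abs_exp_neg_sub (d : ℝ) : |Real.exp (-d) - 1 + d| ≤ d ^ 2 * Real.exp |d| := by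
  have h0 : 0 ≤ Real.exp (-d) - 1 + d := by linarith [Real.add_one_le_exp (-d)]
  rw [abs_of_nonneg h0]
  have h1 : Real.exp (-d) * (1 + d) ≤ 1 := by
    have := mul_le_mul_of_nonneg_left (Real.add_one_le_exp d) (Real.exp_pos (-d)).le
    rw [← Real.exp_add] at this
    simpa [add_comm] using this
  rcases le_total 0 d with h | h
  · rw [abs_of_nonneg h]
    have h2 : 1 ≤ Real.exp d := Real.one_le_exp h
    have h3 : Real.exp (-d) - 1 + d ≤ d ^ 2 := by
      have : Real.exp (-d) ≤ 1 / (1 + d) := by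
        rw [le_div_iff₀ (by linarith)]; exact h1
      have h4 : 1 / (1 + d) ≤ 1 - d + d ^ 2 := by
        rw [div_le_iff₀ (by linarith)]
        nlinarith [pow_nonneg h 3]
      linarith
    nlinarith [sq_nonneg d]
  · rw [abs_of_nonpos h]
    have h2 : 1 ≤ Real.exp (-d) := Real.one_le_exp (by linarith)
    -- `e^t (1 - t + t ^ 2) ≥ 1 + t` follows from the bound `e^t (1 - t) ≤ 1` when `t = -d`
    nlinarith [mul_nonneg (neg_nonneg.2 h) (sub_nonneg.2 h1), sq_nonneg d, Real.add_one_le_exp (-d)]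

lemma sq_mul_exp_le {t : ℝ} (ht : 0 ≤ t) : t ^ 2 * Real.exp (-(3 / 8 * t)) ≤ 128 * Real.exp (-(t / 4)) := by
  have h := Real.quadratic_le_exp_of_nonneg (x := t / 8) (by positivity)
  have e : Real.exp (-(t / 4)) = Real.exp (t / 8) * Real.exp (-(3 / 8 * t)) := by
    rw [← Real.exp_add]; ring_nf
  rw [e, ← mul_assoc]
  refine mul_le_mul_of_nonneg_right ?_ (Real.exp_pos _).le
  nlinarith

/-- Second moments of the weight `exp (-Q0)` on the positive orthant. -/
noncomputable def mom (a b : Fin 4) : ℝ := ∫ x in orth, x a * x b * Real.exp (-Q0 x)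

lemma mul_le_sum_sq {x : E4} (hx : x ∈ orth) (a b : Fin 4) : x a * x b ≤ (∑ a, x a) ^ 2 := by
  have h : ∀ a, 0 ≤ x a := hx
  have h1 : ∀ a, x a ≤ ∑ a, x a := fun a => Finset.single_le_sum (fun a _ => h a) (Finset.mem_univ a)
  rw [sq]
  exact mul_le_mul (h1 a) (h1 b) (h b) ((h a).trans (h1 a))

lemma exp_Q0_le {x : E4} : Real.exp (-Q0 x) ≤ Real.exp (-(1 / 2 * (∑ a, x a) ^ 2)) := by
  refine Real.exp_le_exp.2 (neg_le_neg ?_)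
  have : 0 ≤ ∑ a, x a ^ 2 := Finset.sum_nonneg fun a _ => sq_nonneg _
  simp only [Q0]
  linarith

lemma mom_integrable (a b : Fin 4) : IntegrableOn (fun x : E4 => x a * x b * Real.exp (-Q0 x)) orth := by
  have hcont : Continuous (fun x : E4 => x a * x b * Real.exp (-Q0 x)) := by
    have := continuous_Q0; fun_prop
  refine Integrable.mono' (integrable_gauss_quarter.const_mul 4).integrableOn hcont.aestronglyMeasurable ?_
  refine (ae_restrict_mem isClosed_orth.measurableSet).mono fun x hx => ?_
  have h : ∀ a, 0 ≤ x a := hx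
  rw [Real.norm_of_nonneg (mul_nonneg (mul_nonneg (h a) (h b)) (Real.exp_pos _).le)]
  have hN := norm_sq_le_of_orth hx
  set N := (∑ a, x a) ^ 2
  calc x a * x b * Real.exp (-Q0 x) ≤ N * Real.exp (-(1 / 2 * N)) :=
        mul_le_mul (mul_le_sum_sq hx a b) exp_Q0_le (Real.exp_pos _).le (by positivity)
    _ ≤ 4 * Real.exp (-(N / 4)) := by
        have e : Real.exp (-(N / 4)) = Real.exp (N / 4) * Real.exp (-(1 / 2 * N)) := by
          rw [← Real.exp_add]; ring_nf
        rw [e, ← mul_assoc]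
        refine mul_le_mul_of_nonneg_right ?_ (Real.exp_pos _).le
        linarith [Real.add_one_le_exp (N / 4)]
    _ ≤ 4 * Real.exp (-(‖x‖ ^ 2 / 4)) := by gcongr

lemma Q0_integrable : IntegrableOn (fun x : E4 => Real.exp (-Q0 x)) orth := by
  have hcont : Continuous (fun x : E4 => Real.exp (-Q0 x)) := by
    have := continuous_Q0; fun_prop
  refine Integrable.mono' integrable_gauss_quarter.integrableOn hcont.aestronglyMeasurable ?_
  refine (ae_restrict_mem isClosed_orth.measurableSet).mono fun x hx => ?_
  rw [Real.norm_of_nonneg (Real.exp_pos _).le]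
  refine exp_Q0_le.trans (Real.exp_le_exp.2 ?_)
  have hN := norm_sq_le_of_orth hx
  linarith [sq_nonneg ‖x‖]

/-- Permuting coordinates preserves the orthant, the form `Q0` and the volume. -/
lemma mom_perm (σ : Equiv.Perm (Fin 4)) (a b : Fin 4) : mom (σ a) (σ b) = mom a b := by
  set e := LinearIsometryEquiv.piLpCongrLeft 2 ℝ ℝ σ.symm with he
  have hea : ∀ (x : E4) c, (e x) c = x (σ c) := by
    intro x c; simp [he, LinearIsometryEquiv.piLpCongrLeft_apply, Equiv.piCongrLeft']
  have hpre : e ⁻¹' orth = orth := by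
    ext x
    simp only [orth, mem_preimage, mem_ofPred_eq, hea]
    exact ⟨fun h a => by simpa using h (σ.symm a), fun h a => h _⟩
  have hQ : ∀ x, Q0 (e x) = Q0 x := by
    intro x
    simp only [Q0, hea]
    rw [Equiv.sum_comp σ (fun c => x c), Equiv.sum_comp σ (fun c => x c ^ 2)]
  have := e.measurePreserving.setIntegral_preimage_emb e.toHomeomorph.measurableEmbedding
    (fun x : E4 => x a * x b * Real.exp (-Q0 x)) orth
  rw [hpre] at this
  simp only [hea, hQ] at this
  exact this

lemma mom_diag (a : Fin 4) : mom a a = mom 0 0 := by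
  simpa using mom_perm (Equiv.swap 0 a) 0 0

lemma mom_off {a b : Fin 4} (hab : a ≠ b) : mom a b = mom 0 1 := by
  have : ∀ a b : Fin 4, a ≠ b → ∃ σ : Equiv.Perm (Fin 4), σ 0 = a ∧ σ 1 = b := by decide +kernel
  obtain ⟨σ, rfl, rfl⟩ := this a b hab
  exact mom_perm σ 0 1

lemma mom_off_nonneg : 0 ≤ mom 0 1 :=
  setIntegral_nonneg isClosed_orth.measurableSet fun _ hx =>
    mul_nonneg (mul_nonneg (hx 0) (hx 1)) (Real.exp_pos _).le

lemma mom_diag_pos : 0 < mom 0 0 := by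
  unfold mom
  rw [setIntegral_pos_iff_support_of_nonneg_ae]
  · have hopen : IsOpen (⋂ a, {x : E4 | 0 < x a}) :=
      isOpen_iInter_of_finite fun a => isOpen_lt (by fun_prop) (by fun_prop)
    refine (hopen.measure_pos volume ⟨WithLp.toLp 2 1, ?_⟩).trans_le (measure_mono ?_)
    · simp
    · intro x hx
      simp only [mem_iInter, mem_ofPred_eq] at hx
      refine ⟨?_, fun a => (hx a).le⟩
      have := hx 0
      simp only [Function.mem_support]
      positivity
  · refine (ae_restrict_mem isClosed_orth.measurableSet).mono fun x hx => ?_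
    exact mul_nonneg (mul_nonneg (hx 0) (hx 0)) (Real.exp_pos _).le
  · exact mom_integrable 0 0

/-- First-order expansion of the orthant integral under a perturbation `Δ` of the form `Q0`. By
symmetry the linear term only involves the trace of `Δ` and the sum of its entries. The constant `K`
is the integral of a fixed dominating Gaussian. -/
lemma orth_expansion : ∃ K : ℝ, 0 ≤ K ∧ ∀ (Δ : Fin 4 → Fin 4 → ℝ) (s : ℝ), 0 ≤ s → s ≤ 1 / 16 →
    (∀ a b, |Δ a b| ≤ 2 * s) →
    |(∫ x in orth, Real.exp (-(Q0 x + ∑ a, ∑ b, Δ a b * (x a * x b)))) - (∫ x in orth, Real.exp (-Q0 x))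
      + ((mom 0 0 - mom 0 1) * (∑ a, Δ a a) + mom 0 1 * ∑ a, ∑ b, Δ a b)| ≤ K * s ^ 2 := by
  refine ⟨∫ x in orth, 512 * Real.exp (-(‖x‖ ^ 2 / 4)), setIntegral_nonneg isClosed_orth.measurableSet
    fun _ _ => by positivity, ?_⟩
  intro Δ s hs0 hs hΔ
  set D : E4 → ℝ := fun x => ∑ a, ∑ b, Δ a b * (x a * x b) with hD
  have hDcont : Continuous D := by simp only [hD]; fun_prop
  have hDle : ∀ x ∈ orth, |D x| ≤ 2 * s * (∑ a, x a) ^ 2 := by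
    intro x hx
    have h : ∀ a, 0 ≤ x a := hx
    rw [sq, Finset.sum_mul_sum, Finset.mul_sum]
    refine (Finset.abs_sum_le_sum_abs _ _).trans (Finset.sum_le_sum fun a _ => ?_)
    rw [Finset.mul_sum]
    refine (Finset.abs_sum_le_sum_abs _ _).trans (Finset.sum_le_sum fun b _ => ?_)
    rw [abs_mul, abs_of_nonneg (mul_nonneg (h a) (h b))]
    exact mul_le_mul_of_nonneg_right (hΔ a b) (mul_nonneg (h a) (h b))
  have hpt : ∀ x ∈ orth, |Real.exp (-(Q0 x + D x)) - Real.exp (-Q0 x) + D x * Real.exp (-Q0 x)| ≤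
      512 * Real.exp (-(‖x‖ ^ 2 / 4)) * s ^ 2 := by
    intro x hx
    have hN := norm_sq_le_of_orth hx
    have hd := hDle x hx
    set N := (∑ a, x a) ^ 2 with hNdef
    have hN0 : 0 ≤ N := sq_nonneg _
    have e : Real.exp (-(Q0 x + D x)) - Real.exp (-Q0 x) + D x * Real.exp (-Q0 x)
        = Real.exp (-Q0 x) * (Real.exp (-D x) - 1 + D x) := by
      rw [neg_add, Real.exp_add]; ring
    rw [e, abs_mul, abs_of_pos (Real.exp_pos _)]
    have hd2 : D x ^ 2 ≤ (2 * s * N) ^ 2 := by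
      rw [← sq_abs]; exact pow_le_pow_left₀ (abs_nonneg _) hd 2
    calc Real.exp (-Q0 x) * |Real.exp (-D x) - 1 + D x|
        ≤ Real.exp (-(1 / 2 * N)) * ((2 * s * N) ^ 2 * Real.exp (1 / 8 * N)) := by
          refine mul_le_mul exp_Q0_le ((abs_exp_neg_sub _).trans ?_) (abs_nonneg _) (Real.exp_pos _).le
          refine mul_le_mul hd2 (Real.exp_le_exp.2 (hd.trans ?_)) (Real.exp_pos _).le (sq_nonneg _)
          exact mul_le_mul_of_nonneg_right (by linarith) hN0
      _ = 4 * s ^ 2 * (N ^ 2 * Real.exp (-(3 / 8 * N))) := by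
          have : Real.exp (-(3 / 8 * N)) = Real.exp (-(1 / 2 * N)) * Real.exp (1 / 8 * N) := by
            rw [← Real.exp_add]; ring_nf
          rw [this]; ring
      _ ≤ 4 * s ^ 2 * (128 * Real.exp (-(N / 4))) :=
          mul_le_mul_of_nonneg_left (sq_mul_exp_le hN0) (by positivity)
      _ = 512 * Real.exp (-(N / 4)) * s ^ 2 := by ring
      _ ≤ 512 * Real.exp (-(‖x‖ ^ 2 / 4)) * s ^ 2 := by gcongr
  have hDint : IntegrableOn (fun x => D x * Real.exp (-Q0 x)) orth := by
    have : (fun x => D x * Real.exp (-Q0 x)) =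
        fun x => ∑ a, ∑ b, Δ a b * (x a * x b * Real.exp (-Q0 x)) := by
      funext x
      simp only [hD, Finset.sum_mul]
      refine Finset.sum_congr rfl fun a _ => Finset.sum_congr rfl fun b _ => by ring
    rw [this]
    exact integrable_finsetSum _ fun a _ => integrable_finsetSum _ fun b _ =>
      (mom_integrable a b).const_mul _
  have hDval : ∫ x in orth, D x * Real.exp (-Q0 x) =
      (mom 0 0 - mom 0 1) * (∑ a, Δ a a) + mom 0 1 * ∑ a, ∑ b, Δ a b := by
    have : (fun x => D x * Real.exp (-Q0 x)) =
        fun x => ∑ a, ∑ b, Δ a b * (x a * x b * Real.exp (-Q0 x)) := by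
      funext x
      simp only [hD, Finset.sum_mul]
      refine Finset.sum_congr rfl fun a _ => Finset.sum_congr rfl fun b _ => by ring
    rw [this, integral_finsetSum _ fun a _ => integrable_finsetSum _ fun b _ =>
      (mom_integrable a b).const_mul _]
    have e : ∀ a, ∫ x in orth, ∑ b, Δ a b * (x a * x b * Real.exp (-Q0 x)) = ∑ b, Δ a b * mom a b := by
      intro a
      rw [integral_finsetSum _ fun b _ => (mom_integrable a b).const_mul _]
      exact Finset.sum_congr rfl fun b _ => integral_const_mul _ _
    have e2 : ∀ a b, Δ a b * mom a b =
        (mom 0 0 - mom 0 1) * (if a = b then Δ a b else 0) + mom 0 1 * Δ a b := by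
      intro a b
      by_cases hab : a = b
      · subst hab; simp [mom_diag]; ring
      · simp [hab, mom_off hab]; ring
    simp only [e, e2, Finset.sum_add_distrib, ← Finset.mul_sum, Finset.sum_ite_eq, Finset.mem_univ, if_true]
  have hRint : IntegrableOn (fun x => Real.exp (-(Q0 x + D x)) - Real.exp (-Q0 x) + D x * Real.exp (-Q0 x))
      orth := by
    refine Integrable.mono' ((integrable_gauss_quarter.const_mul 512).mul_const (s ^ 2)).integrableOn ?_ ?_
    · have := continuous_Q0
      exact Continuous.aestronglyMeasurable (by fun_prop)
    · exact (ae_restrict_mem isClosed_orth.measurableSet).mono fun x hx => hpt x hx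
  have hEint : IntegrableOn (fun x => Real.exp (-(Q0 x + D x))) orth := by
    refine ((hRint.add Q0_integrable).sub hDint).congr (Filter.Eventually.of_forall fun x => ?_)
    simp only [Pi.add_apply, Pi.sub_apply]
    ring
  have hEQ : IntegrableOn (fun x => Real.exp (-(Q0 x + D x)) - Real.exp (-Q0 x)) orth :=
    hEint.sub Q0_integrable
  rw [← hDval, ← integral_sub hEint Q0_integrable, ← integral_add hEQ hDint]
  rw [← integral_mul_const]
  refine (abs_integral_le_integral_abs).trans ?_
  exact setIntegral_mono_on hRint.abs ((integrable_gauss_quarter.const_mul 512).mul_const (s ^ 2)).integrableOn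
    isClosed_orth.measurableSet hpt

/-! ### Vertex cones in edge coordinates -/

/-- The matrix whose columns are the edge vectors of `V` issuing from the vertex `i`. -/
def edgeMat (V : Fin 5 → E4) (i : Fin 5) : Matrix (Fin 4) (Fin 4) ℝ :=
  Matrix.of fun c a => (V (i.succAbove a) - V i) c

/-- The linear map `x ↦ ∑ x a • (V (i.succAbove a) - V i)`, which sends the standard basis to the
edges issuing from the vertex `i`. -/
noncomputable def edgeMap (V : Fin 5 → E4) (i : Fin 5) : E4 →L[ℝ] E4 :=
  (Matrix.toEuclideanLin (edgeMat V i)).toContinuousLinearMap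

lemma edgeMap_apply (V : Fin 5 → E4) (i : Fin 5) (x : E4) :
    edgeMap V i x = ∑ a, x a • (V (i.succAbove a) - V i) := by
  ext c
  simp [edgeMap, edgeMat, Matrix.toLpLin_apply, Matrix.mulVec, dotProduct, mul_comm]

lemma edgeMap_det (V : Fin 5 → E4) (i : Fin 5) : (edgeMap V i).det = (edgeMat V i).det := by
  rw [ContinuousLinearMap.det, edgeMap, LinearMap.coe_toContinuousLinearMap, Matrix.toEuclideanLin,
    Matrix.toLpLin_eq_toLin, LinearMap.det_toLin]

/-- The volume spanned by the edges at a vertex does not depend on the vertex: the edges at `i` are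
obtained from those at `0` by an integer matrix of determinant `±1`. -/
lemma abs_det_edgeMat (V : Fin 5 → E4) (i : Fin 5) : |(edgeMat V i).det| = |(edgeMat V 0).det| := by
  have hA : ∀ i : Fin 5, (Matrix.of fun a b : Fin 4 => (if (0 : Fin 5).succAbove a = i.succAbove b then (1 : ℤ) else 0)
      - if (0 : Fin 5).succAbove a = i then 1 else 0).det ^ 2 = 1 := by decide +kernel
  set A := (Matrix.of fun a b : Fin 4 => (if (0 : Fin 5).succAbove a = i.succAbove b then (1 : ℤ) else 0)
      - if (0 : Fin 5).succAbove a = i then 1 else 0) with hAdef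
  have hprod : edgeMat V i = edgeMat V 0 * A.map (Int.castRingHom ℝ) := by
    ext c a
    have hsel : ∀ x : Fin 5, ∑ b : Fin 4, (V ((0 : Fin 5).succAbove b) - V 0) c *
        (if (0 : Fin 5).succAbove b = x then 1 else 0) = (V x - V 0) c := by
      intro x
      have := Fin.sum_univ_succAbove (fun j => (V j - V 0) c * (if j = x then 1 else 0)) 0
      simp only [sub_self, PiLp.zero_apply, zero_mul, zero_add] at this
      rw [← this]
      simp
    simp only [edgeMat, Matrix.mul_apply, Matrix.of_apply, hAdef, Matrix.map_apply]
    simp only [map_sub, mul_sub, Finset.sum_sub_distrib]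
    have e : ∀ P : Prop, ∀ [Decidable P], (Int.castRingHom ℝ) (if P then 1 else 0) = if P then 1 else 0 := by
      intro P _; split_ifs <;> simp
    simp only [e, hsel]
    simp
  rw [hprod, Matrix.det_mul, abs_mul]
  have h2 : (A.map (Int.castRingHom ℝ)).det ^ 2 = 1 := by
    have := hA i
    rw [← hAdef] at this
    have h3 := congrArg (Int.castRingHom ℝ) this
    rw [map_pow, RingHom.map_det, map_one] at h3
    exact h3
  have h4 : |(A.map (Int.castRingHom ℝ)).det| = 1 := by
    rw [← sq_abs] at h2
    nlinarith [abs_nonneg (A.map (Int.castRingHom ℝ)).det]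
  rw [h4, mul_one]

lemma succAbove_sum (f : Fin 5 → ℝ) (i : Fin 5) : ∑ a, f (i.succAbove a) = (∑ j, f j) - f i := by
  rw [Fin.sum_univ_succAbove f i]; ring

lemma Cfg.inner_edgeMap {V h : Fin 5 → E4} {p : Fin 5 → Fin 5 → ℝ} (C : Cfg V h p) (i : Fin 5) (b : Fin 4)
    (x : E4) : ⟪h (i.succAbove b), edgeMap V i x⟫ = x b := by
  rw [edgeMap_apply, inner_sum]
  simp only [real_inner_smul_right, C.hd]
  simp [Fin.succAbove_ne]

lemma Cfg.edgeMap_surj {V h : Fin 5 → E4} {p : Fin 5 → Fin 5 → ℝ} (C : Cfg V h p) (i : Fin 5) (y : E4) :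
    edgeMap V i (WithLp.toLp 2 fun a => ⟪h (i.succAbove a), y⟫) = y := by
  rw [edgeMap_apply]
  have h1 : ∑ j, ⟪h j, y⟫ • (V j - V i) = y := by
    simp only [smul_sub, Finset.sum_sub_distrib, ← Finset.sum_smul, ← sum_inner, C.hsum]
    simp [← C.hexp y]
  rw [Fin.sum_univ_succAbove _ i] at h1
  simpa using h1

/-- The vertex cone is spanned by the edges at the vertex. -/
lemma Cfg.vcone_eq {V h : Fin 5 → E4} {p : Fin 5 → Fin 5 → ℝ} (C : Cfg V h p) (i : Fin 5) :
    vcone h i = edgeMap V i '' orth := by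
  ext y
  constructor
  · intro hy
    exact ⟨_, fun a => hy _ (Fin.succAbove_ne i a), C.edgeMap_surj i y⟩
  · rintro ⟨x, hx, rfl⟩ j hj
    obtain ⟨a, rfl⟩ := Fin.exists_succAbove_eq hj
    rw [C.inner_edgeMap]
    exact hx a

lemma Cfg.det_ne_zero {V h : Fin 5 → E4} {p : Fin 5 → Fin 5 → ℝ} (C : Cfg V h p) :
    (edgeMat V 0).det ≠ 0 := by
  intro h0
  obtain ⟨v, hv, hv0⟩ := Matrix.exists_mulVec_eq_zero_iff.2 h0
  apply hv
  ext b
  have h1 : edgeMap V 0 (WithLp.toLp 2 v) = 0 := by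
    simp [edgeMap, Matrix.toLpLin_apply, hv0]
  have := C.inner_edgeMap 0 b (WithLp.toLp 2 v)
  rw [h1, inner_zero_right] at this
  simpa using this.symm

/-- The perturbation of the Gram matrix of the edges at the vertex `i`, obtained from `p` by the
cosine rule. -/
noncomputable def pert (p : Fin 5 → Fin 5 → ℝ) (i : Fin 5) (a b : Fin 4) : ℝ :=
  (p i (i.succAbove a) + p i (i.succAbove b) - p (i.succAbove a) (i.succAbove b)) / 2

lemma Cfg.norm_edgeMap {V h : Fin 5 → E4} {p : Fin 5 → Fin 5 → ℝ} (C : Cfg V h p) (i : Fin 5) (x : E4) :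
    ‖edgeMap V i x‖ ^ 2 = Q0 x + ∑ a, ∑ b, pert p i a b * (x a * x b) := by
  have hin : ∀ a b, ⟪V (i.succAbove a) - V i, V (i.succAbove b) - V i⟫ =
      (1 + if a = b then 1 else 0) / 2 + pert p i a b := by
    intro a b
    have h1 := C.hp i (i.succAbove a)
    have h2 := C.hp i (i.succAbove b)
    have h3 := C.hp (i.succAbove a) (i.succAbove b)
    rw [norm_sub_rev] at h1 h2
    have e : V (i.succAbove a) - V (i.succAbove b) = (V (i.succAbove a) - V i) - (V (i.succAbove b) - V i) := by
      abel
    rw [e, norm_sub_sq_real, h1, h2] at h3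
    simp only [(Fin.succAbove_ne i _).symm, if_false, Fin.succAbove_right_inj] at h3
    unfold pert
    split_ifs at h3 ⊢ <;> linarith
  rw [edgeMap_apply, ← real_inner_self_eq_norm_sq, sum_inner]
  simp only [inner_sum, real_inner_smul_left, real_inner_smul_right, hin]
  unfold Q0
  rw [sq (∑ a, x a), Finset.sum_mul_sum]
  simp only [Fin.sum_univ_four]
  simp
  ring

/-- The Gaussian mass of the vertex cone, in the edge coordinates at that vertex. -/
lemma Cfg.gauss_vcone {V h : Fin 5 → E4} {p : Fin 5 → Fin 5 → ℝ} (C : Cfg V h p) (i : Fin 5) :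
    gaussE.real (vcone h i) = |(edgeMat V 0).det| *
      ∫ x in orth, Real.exp (-(Q0 x + ∑ a, ∑ b, pert p i a b * (x a * x b))) := by
  have hinj : Set.InjOn (edgeMap V i) orth := by
    intro x _ y _ hxy
    ext b
    rw [← C.inner_edgeMap i b x, hxy, C.inner_edgeMap]
  have h1 := integral_image_eq_integral_abs_det_fderiv_smul volume isClosed_orth.measurableSet
    (fun x _ => (edgeMap V i).hasFDerivWithinAt) hinj (fun y : E4 => Real.exp (-‖y‖ ^ 2))
  have h2 : gaussE.real (vcone h i) = ∫ y in vcone h i, Real.exp (-‖y‖ ^ 2) := by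
    rw [Measure.real, gaussE, withDensity_apply _ (isClosed_vcone h i).measurableSet,
      integral_eq_lintegral_of_nonneg_ae]
    · exact Filter.Eventually.of_forall fun y => (Real.exp_pos _).le
    · exact integrable_gauss.aestronglyMeasurable.restrict
  rw [h2, C.vcone_eq, h1, ← integral_const_mul]
  simp only [edgeMap_det, abs_det_edgeMat, C.norm_edgeMap, smul_eq_mul]

lemma pert_le {p : Fin 5 → Fin 5 → ℝ} {s : ℝ} (hp : ∀ i j, |p i j| ≤ s) (i : Fin 5) (a b : Fin 4) :
    |pert p i a b| ≤ 2 * s := by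
  have h1 := abs_le.1 (hp i (i.succAbove a))
  have h2 := abs_le.1 (hp i (i.succAbove b))
  have h3 := abs_le.1 (hp (i.succAbove a) (i.succAbove b))
  unfold pert
  rw [abs_le]
  constructor <;> linarith

/-- If the entries of `p` add up to `0`, the trace and the total sum of the perturbation at the vertex
`i` only depend on the `i`-th row sum of `p`. -/
lemma Cfg.pert_sum {V h : Fin 5 → E4} {p : Fin 5 → Fin 5 → ℝ} (C : Cfg V h p)
    (hps : ∑ i, ∑ j, p i j = 0) (i : Fin 5) :
    ∑ a, pert p i a a = ∑ j, p i j ∧ ∑ a, ∑ b, pert p i a b = 5 * ∑ j, p i j := by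
  unfold pert
  have h1 := succAbove_sum (fun j => p i j) i
  have h2 : ∀ j, ∑ b, p j (i.succAbove b) = (∑ k, p j k) - p j i := fun j => succAbove_sum (fun k => p j k) i
  have h3 := succAbove_sum (fun j => (∑ k, p j k) - p j i) i
  simp only [Finset.sum_sub_distrib, hps, C.diag, C.symm _ i] at h1 h2 h3
  constructor
  · rw [← Finset.sum_div]
    simp only [C.diag, Finset.sum_sub_distrib, Finset.sum_add_distrib, h1]
    simp
  · simp only [← Finset.sum_div, Finset.sum_sub_distrib, Finset.sum_add_distrib, Finset.sum_const, h1, h2,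
      ← Finset.smul_sum]
    simp
    linarith

/-! ### Comparison of vertex cones -/

lemma Cfg.regular_eq {W h : Fin 5 → E4} (C : Cfg W h 0) :
    20 * gaussE.real (vcone h 0) =
      gaussE.real univ / (2 * Real.pi) * (20 * Real.arccos (1 / 4)) - 4 * gaussE.real univ := by
  rw [← C.sum_vcone_eq]
  have : ∀ i, gaussE.real (vcone h i) = gaussE.real (vcone h 0) := by
    intro i
    rw [C.gauss_vcone, C.gauss_vcone]
    simp [pert]
  simp only [this]
  simp
  ring

/-- A normalised simplex close to the regular one `W` has a vertex cone of Gaussian mass at most that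
of `W`. With `P i` the largest row sum of `p` and `s = max |p j k|`, the vertex
`i` works if `P i ≥ K₁ s²`; otherwise the sum over all vertices is at most the regular one. -/
theorem exists_vcone_le {W hW : Fin 5 → E4} (CW : Cfg W hW 0) {d : ℝ} (hd : 0 < d) :
    ∃ s₀ > 0, ∀ (V h : Fin 5 → E4) (p : Fin 5 → Fin 5 → ℝ), Cfg V h p → ∑ i, ∑ j, p i j = 0 →
      (∀ i j, |p i j| ≤ s₀) → d ≤ |(edgeMat V 0).det| →
      ∃ i, gaussE.real (vcone h i) ≤ gaussE.real (vcone hW 0) := by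
  obtain ⟨K, hK0, hK⟩ := orth_expansion
  set τ := gaussE.real univ / (2 * Real.pi) with hτ
  have hτ0 : 0 ≤ τ := by have := Real.pi_pos; positivity
  set m := mom 0 0 + 4 * mom 0 1 with hm
  have hm0 : 0 < m := by have := mom_diag_pos; have := mom_off_nonneg; positivity
  -- `K₁` makes the linear gain `5 m P i` outweigh the two `O(s²)` errors: the remainders in
  -- `orth_expansion` and the excess of the angle sum in `Cfg.sum_vcone_le`
  set K₁ := (10 * K + 2500 * τ / d) / (5 * m) with hK₁
  have hK₁0 : 0 ≤ K₁ := by positivity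
  set c := 16 / 5 * K₁ + 450 with hc
  have hc0 : 450 ≤ c := by linarith
  refine ⟨1 / (100 * c), by positivity, ?_⟩
  intro V h p C hps hpb hdet
  have hW := CW.regular_eq
  obtain ⟨⟨i₀, j₀⟩, hmax⟩ := Finite.exists_max (fun q : Fin 5 × Fin 5 => |p q.1 q.2|)
  set s := |p i₀ j₀| with hs
  have hs0 : 0 ≤ s := abs_nonneg _
  have hpb' : ∀ i j, |p i j| ≤ s := fun i j => hmax (i, j)
  have hsc : s * c ≤ 1 / 100 := by
    have h1 : s ≤ 1 / (100 * c) := hpb i₀ j₀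
    rw [le_div_iff₀ (by positivity)] at h1
    linarith
  have hs1 : s ≤ 1 / 1000 := by nlinarith
  set P : Fin 5 → ℝ := fun i => ∑ j, p i j with hP
  have hP5 : ∀ i, |P i| ≤ 5 * s := by
    intro i
    refine (Finset.abs_sum_le_sum_abs _ _).trans ((Finset.sum_le_sum fun j _ => hpb' i j).trans ?_)
    simp
  obtain ⟨i, hi⟩ := Finite.exists_max P
  have hPsum : ∑ k, P k = 0 := hps
  have hPi0 : 0 ≤ P i := by
    have := Finset.sum_le_sum fun k (_ : k ∈ Finset.univ) => hi k
    rw [hPsum] at this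
    simpa using this
  rcases le_total (K₁ * s ^ 2) (P i) with hcase | hcase
  · -- the angle at `i` is below the average of the five angles by a multiple of `P i`
    refine ⟨i, ?_⟩
    have hsum := (C.sum_vcone_le hps hs0 (by linarith) hpb' hP5 rfl (by nlinarith)).1
    rw [← hτ] at hsum
    set D := |(edgeMat V 0).det| with hD
    set I : Fin 5 → ℝ := fun k => ∫ x in orth, Real.exp (-(Q0 x + ∑ a, ∑ b, pert p k a b * (x a * x b))) with hI
    have hγ : ∀ k, gaussE.real (vcone h k) = D * I k := fun k => C.gauss_vcone k
    have hIk : ∀ k, |I k - (∫ x in orth, Real.exp (-Q0 x)) + m * P k| ≤ K * s ^ 2 := by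
      intro k
      have h1 := hK (pert p k) s hs0 (by linarith) (pert_le hpb' k)
      rw [(C.pert_sum hps k).1, (C.pert_sum hps k).2] at h1
      convert h1 using 2
      simp only [hm, hP, hI]
      ring
    have hdiff : ∑ k, (I i - I k) ≤ -(5 * m * P i) + 10 * K * s ^ 2 := by
      calc ∑ k, (I i - I k) ≤ ∑ k, (-(m * P i) + m * P k + 2 * (K * s ^ 2)) := by
            refine Finset.sum_le_sum fun k _ => ?_
            have h1 := abs_le.1 (hIk i)
            have h2 := abs_le.1 (hIk k)
            linarith
        _ = -(5 * m * P i) + 10 * K * s ^ 2 := by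
            rw [Finset.sum_add_distrib, Finset.sum_add_distrib, ← Finset.mul_sum, hPsum]
            simp
            ring
    have hdiff2 : ∑ k, (I i - I k) ≤ -(2500 * τ / d) * s ^ 2 := by
      have : 5 * m * (K₁ * s ^ 2) = (10 * K + 2500 * τ / d) * s ^ 2 := by
        rw [hK₁]; field_simp
      have := mul_le_mul_of_nonneg_left hcase (by positivity : 0 ≤ 5 * m)
      linarith
    have h5 : 5 * gaussE.real (vcone h i) = (∑ k, gaussE.real (vcone h k)) + D * ∑ k, (I i - I k) := by
      simp only [hγ, Finset.sum_sub_distrib, ← Finset.mul_sum]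
      simp
      ring
    have h6 : D * ∑ k, (I i - I k) ≤ -(2500 * τ * s ^ 2) := by
      calc D * ∑ k, (I i - I k) ≤ D * (-(2500 * τ / d) * s ^ 2) :=
            mul_le_mul_of_nonneg_left hdiff2 (abs_nonneg _)
        _ = -(D * (2500 * τ / d * s ^ 2)) := by ring
        _ ≤ -(d * (2500 * τ / d * s ^ 2)) :=
            neg_le_neg (mul_le_mul_of_nonneg_right hdet (by positivity))
        _ = -(2500 * τ * s ^ 2) := by field_simp
    have h7 : τ * (100 * (4 / 5 * (5 * s) + 450 * s ^ 2) ^ 2) ≤ τ * (10000 * s ^ 2) := by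
      refine mul_le_mul_of_nonneg_left ?_ hτ0
      have : 4 / 5 * (5 * s) + 450 * s ^ 2 ≤ 10 * s := by nlinarith
      have := pow_le_pow_left₀ (by positivity) this 2
      linarith
    linarith
  · -- all row sums are `O(s²)`, because they add up to `0`, so the quadratic gain of the angle
    -- sum applies with `E = O(s²)`
    have hM : ∀ k, |P k| ≤ 4 * (K₁ * s ^ 2) := by
      intro k
      have h1 : -P k ≤ 4 * P i := by
        have h2 := Fin.sum_univ_succAbove P k
        rw [hPsum] at h2
        have h3 := Finset.sum_le_sum fun a (_ : a ∈ Finset.univ) => hi (k.succAbove a)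
        simp at h3
        linarith
      rw [abs_le]
      constructor <;> linarith [hi k]
    have hE : 4 / 5 * (4 * (K₁ * s ^ 2)) + 450 * s ^ 2 = c * s * s := by rw [hc]; ring
    have hE1 : c * s * s ≤ 1 / 100 * s := mul_le_mul_of_nonneg_right (by linarith) hs0
    have hsum := (C.sum_vcone_le hps hs0 (by linarith) hpb' hM hE.symm (by linarith)).2
      ⟨i₀, j₀, rfl⟩ (by linarith)
    rw [← hτ] at hsum
    have h7 : τ * (100 * (c * s * s) ^ 2 - s ^ 2 / 100) ≤ 0 := by
      refine mul_nonpos_of_nonneg_of_nonpos hτ0 ?_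
      have := pow_le_pow_left₀ (by positivity) hE1 2
      linarith
    by_contra! hlt
    have h8 := Finset.sum_lt_sum_of_nonempty (Finset.univ_nonempty (α := Fin 5)) fun k _ => hlt k
    simp at h8
    linarith

/-! ### Barycentric gradients and the regular simplex -/

/-- The gradients of the barycentric coordinates of a simplex: they satisfy the relations of `Cfg`,
and the directions pointing from a vertex into the simplex form the corresponding `vcone`. -/
lemma exists_dual {V : Fin 5 → E4} (hV : AffineIndependent ℝ V) : ∃ h : Fin 5 → E4,
    ∑ i, h i = 0 ∧ (∀ x, x = ∑ j, ⟪h j, x⟫ • V j) ∧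
    (∀ i j k, ⟪h i, V j - V k⟫ = (if i = j then 1 else 0) - (if i = k then 1 else 0)) ∧
    ∀ i, {u : E4 | ∃ t > (0 : ℝ), V i + t • u ∈ convexHull ℝ (Set.range V)} = vcone h i := by
  let b : AffineBasis (Fin 5) ℝ E4 := ⟨V, hV, by
    rw [hV.affineSpan_eq_top_iff_card_eq_finrank_add_one]; simp⟩
  have hbV : ∀ i, b i = V i := fun i => rfl
  let h : Fin 5 → E4 := fun i => (InnerProductSpace.toDual ℝ E4).symm
    (LinearMap.toContinuousLinearMap (b.coord i).linear)
  have hh : ∀ i x, ⟪h i, x⟫ = (b.coord i).linear x := by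
    intro i x
    simp only [h, InnerProductSpace.toDual_symm_apply]
    rfl
  have hsub : ∀ i x y, ⟪h i, x - y⟫ = b.coord i x - b.coord i y := by
    intro i x y
    rw [hh]
    exact (b.coord i).linearMap_vsub x y
  have hadd : ∀ i x y, b.coord i (x + y) = b.coord i x + ⟪h i, y⟫ := by
    intro i x y
    have := hsub i (x + y) x
    rw [add_sub_cancel_left] at this
    linarith
  refine ⟨h, ?_, ?_, ?_, ?_⟩
  · refine ext_inner_right ℝ fun x => ?_
    rw [sum_inner, inner_zero_left]
    have h1 : ∀ i, ⟪h i, x⟫ = b.coord i (V 0 + x) - b.coord i (V 0) := by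
      intro i; rw [hadd]; ring
    simp only [h1, Finset.sum_sub_distrib, b.sum_coord_apply_eq_one, sub_self]
  · intro x
    have h1 : ∀ i, ⟪h i, x⟫ = b.coord i (V 0 + x) - b.coord i (V 0) := by
      intro i; rw [hadd]; ring
    have h2 := b.linear_combination_coord_eq_self (V 0 + x)
    have h3 := b.linear_combination_coord_eq_self (V 0)
    simp only [hbV] at h2 h3
    simp only [h1, sub_smul, Finset.sum_sub_distrib, h2, h3]
    simp
  · intro i j k
    rw [hsub, ← hbV j, ← hbV k, b.coord_apply, b.coord_apply]
  · intro i
    have hull : convexHull ℝ (Set.range V) = {x | ∀ i, 0 ≤ b.coord i x} := b.convexHull_eq_nonneg_coord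
    have hco : ∀ j (t : ℝ) u, b.coord j (V i + t • u) = (if j = i then 1 else 0) + t * ⟪h j, u⟫ := by
      intro j t u
      rw [hadd, ← hbV i, b.coord_apply, real_inner_smul_right]
    ext u
    rw [hull]
    simp only [mem_ofPred_eq, hco, vcone]
    constructor
    · rintro ⟨t, ht, hu⟩ j hj
      have := hu j
      rw [if_neg hj, zero_add] at this
      exact nonneg_of_mul_nonneg_right this ht
    · intro hu
      refine ⟨1 / (1 + |⟪h i, u⟫|), by positivity, fun j => ?_⟩
      by_cases hj : j = i
      · subst hj
        rw [if_pos rfl]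
        have h1 := neg_abs_le ⟪h j, u⟫
        have h2 : 0 < 1 + |⟪h j, u⟫| := by positivity
        have e : 1 + 1 / (1 + |⟪h j, u⟫|) * ⟪h j, u⟫ = (1 + |⟪h j, u⟫| + ⟪h j, u⟫) / (1 + |⟪h j, u⟫|) := by
          field_simp
        rw [e]
        exact div_nonneg (by linarith) h2.le
      · rw [if_neg hj, zero_add]
        exact mul_nonneg (by positivity) (hu j hj)

/-- The data of the simplex rescaled by `c`, and the solid angles of the original simplex in terms of
Gaussian masses; neither cone nor solid angle is affected by the scaling. -/
lemma exists_cfg {V : Fin 5 → E4} (hV : AffineIndependent ℝ V) {c : ℝ} (hc : 0 < c) : ∃ h : Fin 5 → E4,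
    Cfg (c • V) h (fun j k => c ^ 2 * ‖V j - V k‖ ^ 2 - if j = k then 0 else 1) ∧
    ∀ i, solidAngle4 (convexHull ℝ (Set.range V)) (V i) * gaussE univ =
      μH[3] (sphere (0 : E4) 1) * gaussE (vcone h i) := by
  obtain ⟨h, h1, h2, h3, h4⟩ := exists_dual hV
  refine ⟨fun i => c⁻¹ • h i, ⟨?_, ?_, ?_, ?_⟩, ?_⟩
  · rw [← Finset.smul_sum, h1, smul_zero]
  · intro x
    conv_lhs => rw [h2 x]
    refine Finset.sum_congr rfl fun j _ => ?_
    rw [real_inner_smul_left, Pi.smul_apply, smul_smul]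
    congr 1
    field_simp
  · intro i j k
    rw [← h3 i j k, Pi.smul_apply, Pi.smul_apply, ← smul_sub, real_inner_smul_left, real_inner_smul_right]
    field_simp
  · intro j k
    rw [Pi.smul_apply, Pi.smul_apply, ← smul_sub, norm_smul, mul_pow, Real.norm_eq_abs, sq_abs]
    ring
  · intro i
    have e : vcone (fun i => c⁻¹ • h i) i = vcone h i := by
      ext y
      simp only [vcone, mem_ofPred_eq, real_inner_smul_left]
      refine forall_congr' fun j => imp_congr_right fun _ => ?_
      exact mul_nonneg_iff_of_pos_left (by positivity)
    rw [e, ← hausdorff_cone (isClosed_vcone h i).measurableSet]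
    · rw [solidAngle4, ← h4 i]
      congr 2
      ext u
      simp [and_comm]
    · intro y hy
      simp only [vcone, mem_ofPred_eq, real_inner_smul_right]
      refine forall_congr' fun j => imp_congr_right fun _ => ?_
      exact mul_nonneg_iff_of_pos_left (by positivity)

/-- If `∑ w i = 0` and `∑ w i • R i = 0`, then expanding `0 = ‖∑ w i • R i‖²` in squared distances
gives `r² / 2 * ∑ w i ^ 2 = 0`. -/
lemma affineIndependent_of_regular {R : Fin 5 → E4} {r : ℝ} (hr : 0 < r)
    (hreg : ∀ i j, i ≠ j → dist (R i) (R j) = r) : AffineIndependent ℝ R := by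
  rw [affineIndependent_iff_of_fintype]
  intro w hw hz i
  have h1 := EuclideanGeometry.inner_weightedVSub (s₁ := Finset.univ) (s₂ := Finset.univ) R hw R hw
  rw [hz, inner_zero_left] at h1
  have e : ∀ i j, w i * w j * (dist (R i) (R j) * dist (R i) (R j)) =
      r ^ 2 * (w i * w j) - r ^ 2 * (if i = j then w i * w j else 0) := by
    intro i j
    by_cases hij : i = j
    · simp [hij]
    · rw [hreg i j hij]; simp [hij]; ring
  simp only [e, Finset.sum_sub_distrib, ← Finset.mul_sum, hw, Finset.sum_ite_eq, Finset.mem_univ, if_true,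
    mul_zero, zero_sub, Finset.sum_neg_distrib, neg_neg] at h1
  have h2 : ∑ i, w i * w i = 0 := by
    have : r ^ 2 ≠ 0 := by positivity
    have h3 : r ^ 2 * ∑ i, w i * w i = 0 := by linarith
    exact (mul_eq_zero.1 h3).resolve_left this
  rw [Finset.sum_eq_zero_iff_of_nonneg fun i _ => mul_self_nonneg _] at h2
  simpa using h2 i (Finset.mem_univ i)

end

/-- Every 4-simplex sufficiently close to the regular 4-simplex has a vertex whose solid
angle is at most the solid angle at a vertex of the regular 4-simplex. -/
theorem local_exists_vertex_solidAngle_le_regular4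
    (R : Fin 5 → EuclideanSpace ℝ (Fin 4)) (r : ℝ) (hr : 0 < r)
    (hreg : ∀ i j, i ≠ j → dist (R i) (R j) = r) :
    ∃ ε > (0 : ℝ), ∀ V : Fin 5 → EuclideanSpace ℝ (Fin 4),
      (∀ i, ‖V i - R i‖ < ε) →
      AffineIndependent ℝ V ∧
      ∃ i, solidAngle4 (convexHull ℝ (Set.range V)) (V i) ≤
        solidAngle4 (convexHull ℝ (Set.range R)) (R 0) := by
  have hR := affineIndependent_of_regular hr hreg
  -- `L V` is the mean squared edge length, over the 20 ordered pairs; scaling by `c V` makes it `1`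
  set L : (Fin 5 → E4) → ℝ := fun V => (∑ j, ∑ k, ‖V j - V k‖ ^ 2) / 20 with hL
  set c : (Fin 5 → E4) → ℝ := fun V => (√(L V))⁻¹ with hc
  have hRsq : ∀ j k, ‖R j - R k‖ ^ 2 = r ^ 2 * (if j = k then 0 else 1) := by
    intro j k
    by_cases hjk : j = k
    · simp [hjk]
    · rw [← dist_eq_norm, hreg j k hjk]; simp [hjk]
  have hLR : L R = r ^ 2 := by
    simp only [hL, hRsq, ← Finset.mul_sum]
    have : ∑ j : Fin 5, ∑ k : Fin 5, (if j = k then (0 : ℝ) else 1) = 20 := by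
      simp [Fin.sum_univ_succ]; norm_num
    rw [this]; ring
  have hcR : c R = r⁻¹ := by simp only [hc, hLR, Real.sqrt_sq hr.le]
  have hLcont : Continuous L := by simp only [hL]; fun_prop
  have hccont : ContinuousAt c R := by
    refine (Real.continuous_sqrt.comp hLcont).continuousAt.inv₀ ?_
    simp only [Function.comp, hLR, Real.sqrt_sq hr.le]
    exact hr.ne'
  obtain ⟨hW, CW, hWs⟩ := exists_cfg hR (c := c R) (by rw [hcR]; positivity)
  have hp0 : (fun j k => c R ^ 2 * ‖R j - R k‖ ^ 2 - if j = k then 0 else 1) =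
      (0 : Fin 5 → Fin 5 → ℝ) := by
    funext j k
    rw [hRsq, hcR]
    field_simp
    simp
  rw [hp0] at CW
  have hdpos : 0 < |(edgeMat (c R • R) 0).det| := abs_pos.2 CW.det_ne_zero
  obtain ⟨s₀, hs₀, hkey⟩ := exists_vcone_le CW (half_pos hdpos)
  have ev1 : ∀ᶠ V in nhds R, AffineIndependent ℝ V := isOpen_setOfPred_affineIndependent.mem_nhds hR
  have ev2 : ∀ᶠ V in nhds R, ∀ j k : Fin 5,
      |c V ^ 2 * ‖V j - V k‖ ^ 2 - (if j = k then 0 else 1)| < s₀ := by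
    rw [Filter.eventually_all]
    intro j
    rw [Filter.eventually_all]
    intro k
    have hcont : ContinuousAt (fun V : Fin 5 → E4 =>
        |c V ^ 2 * ‖V j - V k‖ ^ 2 - (if j = k then 0 else 1)|) R := by
      refine (((hccont.pow 2).mul ?_).sub continuousAt_const).abs
      exact Continuous.continuousAt (by fun_prop)
    refine hcont.eventually_lt continuousAt_const ?_
    have : c R ^ 2 * ‖R j - R k‖ ^ 2 - (if j = k then 0 else 1) = 0 := congrFun (congrFun hp0 j) k
    rw [this]
    simpa using hs₀
  have ev3 : ∀ᶠ V in nhds R, |(edgeMat (c R • R) 0).det| / 2 < |(edgeMat (c V • V) 0).det| := by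
    have hcont : ContinuousAt (fun V : Fin 5 → E4 => |(edgeMat (c V • V) 0).det|) R := by
      have h1 : ContinuousAt (fun V : Fin 5 → E4 => c V • V) R := hccont.smul continuousAt_id
      have h2 : Continuous (fun V : Fin 5 → E4 => |(edgeMat V 0).det|) := by
        refine (Continuous.matrix_det ?_).abs
        refine continuous_matrix fun a b => ?_
        simp only [edgeMat, Matrix.of_apply]
        fun_prop
      exact h2.continuousAt.comp h1
    exact continuousAt_const.eventually_lt hcont (half_lt_self hdpos)
  have ev4 : ∀ᶠ V in nhds R, 0 < L V :=
    continuousAt_const.eventually_lt hLcont.continuousAt (by rw [hLR]; positivity)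
  obtain ⟨ε, hε, hball⟩ := Metric.eventually_nhds_iff.1 (ev1.and (ev2.and (ev3.and ev4)))
  refine ⟨ε, hε, fun V hV => ?_⟩
  obtain ⟨hVa, hV2, hV3, hV4⟩ := hball (y := V) (by
    rw [dist_pi_lt_iff hε]
    intro i
    rw [dist_eq_norm]
    exact hV i)
  refine ⟨hVa, ?_⟩
  have hcV : 0 < c V := by simp only [hc]; positivity
  obtain ⟨h, C, hs⟩ := exists_cfg hVa hcV
  have hps : ∑ j, ∑ k, (c V ^ 2 * ‖V j - V k‖ ^ 2 - if j = k then 0 else 1) = 0 := by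
    have hcsq : c V ^ 2 = (L V)⁻¹ := by
      simp only [hc]; rw [inv_pow, Real.sq_sqrt hV4.le]
    have hsum : ∑ j, ∑ k, ‖V j - V k‖ ^ 2 = 20 * L V := by simp only [hL]; ring
    simp only [Finset.sum_sub_distrib, ← Finset.mul_sum, hsum, hcsq]
    have : ∑ j : Fin 5, ∑ k : Fin 5, (if j = k then (0 : ℝ) else 1) = 20 := by
      simp [Fin.sum_univ_succ]; norm_num
    rw [this]
    field_simp
    simp
  obtain ⟨i, hi⟩ := hkey _ _ _ C hps (fun j k => (hV2 j k).le) hV3.le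
  refine ⟨i, ?_⟩
  have hi' : gaussE (vcone h i) ≤ gaussE (vcone hW 0) :=
    (ENNReal.toReal_le_toReal (measure_ne_top _ _) (measure_ne_top _ _)).1 hi
  rw [← ENNReal.mul_le_mul_iff_left gauss_univ_ne_zero (measure_ne_top gaussE Set.univ), hs i, hWs 0]
  gcongr
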